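/- arXiv:1903.12082 — 3 statements merged into one kernel-verified Lean document; each statement's English description precedes it below -/
import Mathlib

section
/- For every integer k ≥ 2, every fixed graph G with chromatic number χ(G) ≥ 2, and every ε > 0, there exists n₀ such that for all n ≥ n₀, êx_k(n,G) ≤ (1 − 1/(χ(G)−1) + ε) · C(n,2). -/
/-- A hypergraph `H` (given by its finite collection of hyperedges on vertex type `β`)
contains a Berge copy of the graph `G`: there is an injection of the vertices of `G`
and an injection of the edges of `G` into hyperedges of `H` such that each edge of `G`
is contained in its corresponding hyperedge. -/
def HasBergeCopy {α β : Type*} [DecidableEq β] (G : SimpleGraph α)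
    (H : Finset (Finset β)) : Prop :=
  ∃ (i : α → β) (f : Sym2 α → Finset β),
    Function.Injective i ∧ Set.InjOn f G.edgeSet ∧
    (∀ e ∈ G.edgeSet, f e ∈ H) ∧
    (∀ u v, G.Adj u v → i u ∈ f s(u, v) ∧ i v ∈ f s(u, v))

/-- The edge set of the shadow graph of a hypergraph `H`: all 2-element subsets of
vertices covered by some hyperedge of `H`. -/
def covPairs {β : Type*} [DecidableEq β] (H : Finset (Finset β)) : Finset (Finset β) :=
  H.biUnion fun h => Finset.powersetCard 2 h

/-- The `R`-cover Turán number `êx_R(n, G)`: the maximum number of edges in the shadow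
of a Berge-`G`-free `R`-graph on `n` vertices. -/
noncomputable def coverTuranNumber {α : Type*} (R : Set ℕ) (n : ℕ)
    (G : SimpleGraph α) : ℕ :=
  sSup { m | ∃ H : Finset (Finset (Fin n)),
    (∀ h ∈ H, h.card ∈ R) ∧ ¬ HasBergeCopy G H ∧ m = (covPairs H).card }

open Finset in
lemma bad_count {α : Type*} [Fintype α] [DecidableEq α] (T k : ℕ) (c : α)
    (P : (α → Fin T) → Prop) [DecidablePred P]
    (h : ∀ φ : α → Fin T, #{x : Fin T | P (Function.update φ c x)} ≤ k) :
    #{φ : α → Fin T | P φ} * T ≤ T ^ Fintype.card α * k := by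
  have h1 : #(({φ : α → Fin T | P φ} : Finset _) ×ˢ (univ : Finset (Fin T))) ≤
      #((univ : Finset (α → Fin T)).sigma
        (fun φ => ({x : Fin T | P (Function.update φ c x)} : Finset (Fin T)))) := by
    apply Finset.card_le_card_of_injOn (fun p => ⟨Function.update p.1 c p.2, p.1 c⟩)
    · intro p hp
      simp at hp ⊢
      exact hp
    · rintro ⟨φ, x⟩ hp ⟨ψ, y⟩ hq hpq
      simp only [Sigma.mk.injEq, heq_eq_eq] at hpq
      obtain ⟨h1, h2⟩ := hpq
      have h3 : x = y := by simpa using congrFun h1 c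
      have h4 : φ = ψ := by
        funext a
        by_cases hac : a = c
        · rw [hac, h2]
        · simpa [hac] using congrFun h1 a
      rw [h3, h4]
  rw [card_product, card_sigma, card_univ, Fintype.card_fin] at h1
  refine h1.trans ((Finset.sum_le_card_nsmul _ _ k (fun φ _ => h φ)).trans ?_)
  simp

/-- The shadow graph. -/
def shadowG {n : ℕ} (H : Finset (Finset (Fin n))) : SimpleGraph (Fin n) where
  Adj u v := u ≠ v ∧ ∃ h ∈ H, u ∈ h ∧ v ∈ h
  symm := ⟨fun _ _ ⟨h1, h, hh, h2, h3⟩ => ⟨h1.symm, h, hh, h3, h2⟩⟩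
  loopless := ⟨fun _ h => h.1 rfl⟩

open Finset in
lemma berge_of_equipartite {α : Type*} [Fintype α] (G : SimpleGraph α) (k χ T n : ℕ)
    (C : G.Coloring (Fin χ)) (hT : Fintype.card α ^ 3 * (k + 1) < T)
    (H : Finset (Finset (Fin n))) (hH : ∀ h ∈ H, h.card = k)
    (hc : (SimpleGraph.completeEquipartiteGraph χ T).IsContained (shadowG H)) :
    HasBergeCopy G H := by
  classical
  obtain ⟨g⟩ := hc
  have hgi : Function.Injective g := g.injective
  have hF : ∀ e : Sym2 (Fin n), ∃ s : Finset (Fin n), #s ≤ k ∧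
      ((∃ h ∈ H, ∀ x ∈ e, x ∈ h) → s ∈ H ∧ ∀ x ∈ e, x ∈ s) := by
    intro e
    by_cases he : ∃ h ∈ H, ∀ x ∈ e, x ∈ h
    · obtain ⟨h, hh, hx⟩ := he
      exact ⟨h, (hH h hh).le, fun _ => ⟨hh, hx⟩⟩
    · exact ⟨∅, by simp, fun h => absurd h he⟩
  choose F hFk hFH using hF
  let i : (α → Fin T) → α → Fin n := fun φ a => g (C a, φ a)
  let P : α × α × α → (α → Fin T) → Prop := fun p φ =>
    p.2.2 ≠ p.1 ∧ p.2.2 ≠ p.2.1 ∧ i φ p.2.2 ∈ insert (i φ p.1) (F s(i φ p.1, i φ p.2.1))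
  have hP : ∀ p, #{φ | P p φ} * T ≤ T ^ Fintype.card α * (k + 1) := by
    rintro ⟨a, b, c⟩
    apply bad_count T (k + 1) c
    intro φ
    by_cases hab : c ≠ a ∧ c ≠ b
    · obtain ⟨hca, hcb⟩ := hab
      have : #(insert (i φ a) (F s(i φ a, i φ b))) ≤ k + 1 :=
        (card_insert_le _ _).trans (by simpa using hFk _)
      refine le_trans ?_ this
      apply Finset.card_le_card_of_injOn (fun x => g (C c, x))
      · intro x hx
        simpa [P, i, hca, hcb, hca.symm, hcb.symm] using hx
      · intro x _ y _ hxy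
        simpa using hgi hxy
    · have : ({x : Fin T | P (a, b, c) (Function.update φ c x)} : Finset (Fin T)) = ∅ := by
        ext x
        simp only [P, mem_filter, mem_univ, true_and, notMem_empty, iff_false]
        exact fun h => hab ⟨h.1, h.2.1⟩
      rw [this]; simp
  have hex : ∃ φ, ∀ p, ¬ P p φ := by
    by_contra! hcon
    have h1 : (univ : Finset (α → Fin T)) ⊆ univ.biUnion (fun p => ({φ | P p φ} : Finset _)) := by
      intro φ _
      obtain ⟨p, hp⟩ := hcon φ
      simp only [mem_biUnion, mem_univ, true_and, mem_filter]
      exact ⟨p, hp⟩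
    have h2 := (card_le_card h1).trans card_biUnion_le
    rw [card_univ, Fintype.card_fun, Fintype.card_fin] at h2
    have h3 : T ^ Fintype.card α * T ≤
        Fintype.card α ^ 3 * (T ^ Fintype.card α * (k + 1)) := by
      calc _ ≤ (∑ p, #{φ | P p φ}) * T := Nat.mul_le_mul_right _ h2
        _ = ∑ p, #{φ | P p φ} * T := Finset.sum_mul _ _ _
        _ ≤ ∑ p : α × α × α, T ^ Fintype.card α * (k + 1) := Finset.sum_le_sum fun p _ => hP p
        _ = _ := by
          rw [Finset.sum_const, card_univ, Fintype.card_prod, Fintype.card_prod, smul_eq_mul]; ring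
    have hpos : 0 < T ^ Fintype.card α := Nat.pow_pos (by omega)
    nlinarith
  obtain ⟨φ, hφ⟩ := hex
  have key : ∀ a b c, c ≠ a → c ≠ b → i φ c ≠ i φ a ∧ i φ c ∉ F s(i φ a, i φ b) := by
    intro a b c h1 h2
    have := hφ (a, b, c)
    simp only [P, mem_insert, not_and, not_or] at this
    exact this h1 h2
  have hi : Function.Injective (i φ) := by
    intro a b hab
    by_contra hne
    exact (key b b a hne hne).1 hab
  have hadj : ∀ a b, G.Adj a b → F s(i φ a, i φ b) ∈ H ∧
      ∀ x ∈ s(i φ a, i φ b), x ∈ F s(i φ a, i φ b) := by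
    intro a b hab
    apply hFH
    have h1 : (SimpleGraph.completeEquipartiteGraph χ T).Adj (C a, φ a) (C b, φ b) := by
      rw [SimpleGraph.completeEquipartiteGraph_adj]
      exact C.valid hab
    obtain ⟨_, h, hh, h2, h3⟩ := g.toHom.map_adj h1
    refine ⟨h, hh, ?_⟩
    intro x hx
    rcases Sym2.mem_iff.1 hx with rfl | rfl
    · exact h2
    · exact h3
  refine ⟨i φ, fun e => F (e.map (i φ)), hi, ?_, ?_, ?_⟩
  · intro e he e' he' hee
    induction e with | _ a b
    induction e' with | _ c d
    simp only [Sym2.map_mk] at hee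
    have hcd := (hadj c d he').2
    rw [← hee] at hcd
    have hc := hcd (i φ c) (by simp)
    have hd := hcd (i φ d) (by simp)
    have hne : c ≠ d := SimpleGraph.Adj.ne he'
    have hc' : c = a ∨ c = b := by
      by_contra! hcon
      exact (key a b c hcon.1 hcon.2).2 hc
    have hd' : d = a ∨ d = b := by
      by_contra! hcon
      exact (key a b d hcon.1 hcon.2).2 hd
    rcases hc' with rfl | rfl <;> rcases hd' with rfl | rfl
    · exact absurd rfl hne
    · rfl
    · exact Sym2.eq_swap
    · exact absurd rfl hne
  · intro e he
    induction e with | _ a b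
    exact (hadj a b he).1
  · intro u v huv
    have := (hadj u v huv).2
    exact ⟨this _ (by simp), this _ (by simp)⟩

open Finset in
lemma covPairs_card_le {n : ℕ} (H : Finset (Finset (Fin n))) [DecidableRel (shadowG H).Adj] :
    #(covPairs H) ≤ #(shadowG H).edgeFinset := by
  classical
  have : covPairs H ⊆ (shadowG H).edgeFinset.image Sym2.toFinset := by
    intro s hs
    simp only [covPairs, mem_biUnion, mem_powersetCard] at hs
    obtain ⟨h, hh, hsub, hcard⟩ := hs
    obtain ⟨u, v, huv, rfl⟩ := card_eq_two.1 hcard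
    rw [mem_image]
    refine ⟨s(u, v), ?_, ?_⟩
    · rw [SimpleGraph.mem_edgeFinset, SimpleGraph.mem_edgeSet]
      exact ⟨huv, h, hh, hsub (by simp), hsub (by simp)⟩
    · ext x; simp
  exact (card_le_card this).trans card_image_le

open Finset SimpleGraph in
/-- Erdős–Stone, extremal number version. -/
lemma erdos_stone_ex (r t : ℕ) (hr : 1 ≤ r) (ht : 1 ≤ t) (ε : ℝ) (hε : 0 < ε) :
    ∃ N : ℕ, ∀ n ≥ N, (extremalNumber n (completeEquipartiteGraph (r + 1) t) : ℝ) ≤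
      (1 - 1 / (r : ℝ) + ε) * (n.choose 2 : ℝ) := by
  classical
  set F := completeEquipartiteGraph (r + 1) t with hFdef
  have hF : F ≠ ⊥ := by
    rw [hFdef, Ne, completeEquipartiteGraph_eq_bot_iff]; omega
  obtain ⟨N, hN⟩ := Filter.eventually_atTop.1
    (eventually_completeEquipartiteGraph_isContained_of_minDegree (half_pos hε) r t)
  set c : ℝ := 1 - 1 / (r : ℝ) + ε / 2 with hc
  have hr' : (1 : ℝ) ≤ r := by exact_mod_cast hr
  have hcpos : 0 < c := by
    have : 1 / (r : ℝ) ≤ 1 := by rw [div_le_one (by linarith)]; exact hr'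
    linarith
  have step : ∀ n, N ≤ n + 1 → (extremalNumber (n + 1) F : ℝ) ≤
      extremalNumber n F + c * (n + 1) := by
    intro n hn
    obtain ⟨Γ, hdec, hΓ⟩ := exists_isExtremal_free (V := Fin (n + 1)) hF
    have hcard := card_edgeFinset_of_isExtremal_free hΓ
    have hδ : (Γ.minDegree : ℝ) < c * ((n + 1 : ℕ) : ℝ) := by
      by_contra! hcon
      exact hΓ.prop (hN (n + 1) hn hcon)
    obtain ⟨v, hv⟩ := Γ.exists_minimal_degree_vertex
    have hdel := card_edgeFinset_deleteIncidenceSet_le_extremalNumber hΓ.prop v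
    rw [card_edgeFinset_deleteIncidenceSet, ← hv] at hdel
    simp only [Fintype.card_fin, Nat.add_sub_cancel] at hdel
    have hdel' : extremalNumber (n + 1) F ≤ extremalNumber n F + Γ.minDegree := by
      simp only [Fintype.card_fin] at hcard
      omega
    have : (extremalNumber (n + 1) F : ℝ) ≤ extremalNumber n F + Γ.minDegree := by
      exact_mod_cast hdel'
    push_cast at hδ
    linarith
  have sum : ∀ j : ℕ, (extremalNumber (N + j) F : ℝ) ≤
      extremalNumber N F + c * ((N + j : ℝ) * (N + j + 1) / 2) := by
    intro j
    induction j with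
    | zero =>
      have : 0 ≤ c * (((N : ℝ) + (0 : ℕ)) * (N + (0 : ℕ) + 1) / 2) := by positivity
      simpa using this
    | succ j ih =>
      have := step (N + j) (by omega)
      rw [← add_assoc]
      push_cast at this ⊢
      nlinarith
  set E : ℝ := ((extremalNumber N F : ℕ) : ℝ) with hE
  have hE0 : 0 ≤ E := by positivity
  obtain ⟨M, hM⟩ := exists_nat_ge (2 * (E + 2 * c) / (ε / 2) + 2)
  refine ⟨N + M + 2, fun n hn => ?_⟩
  obtain ⟨j, rfl⟩ := Nat.exists_eq_add_of_le (show N ≤ n by omega)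
  have h1 := sum j
  rw [Nat.cast_choose_two]
  have hx : ((N + j : ℕ) : ℝ) = N + j := by push_cast; ring
  have hxM : (M : ℝ) + 2 ≤ ((N + j : ℕ) : ℝ) := by
    have : M + 2 ≤ N + j := by omega
    exact_mod_cast this
  rw [← hx] at h1
  set x : ℝ := ((N + j : ℕ) : ℝ)
  have hD : 2 * (E + 2 * c) ≤ (ε / 2) * (x - 1) := by
    have : 2 * (E + 2 * c) / (ε / 2) ≤ x - 1 := by linarith
    rw [div_le_iff₀ (by positivity)] at this
    linarith
  have hx2 : 2 ≤ x := by
    have : (0 : ℝ) ≤ M := by positivity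
    linarith
  have : 1 - 1 / (r : ℝ) + ε = c + ε / 2 := by rw [hc]; ring
  rw [this]
  nlinarith [mul_le_mul_of_nonneg_right hD (show 0 ≤ x by linarith)]

theorem stmt2 {α : Type*} [Fintype α] (k : ℕ) (hk : 2 ≤ k) (G : SimpleGraph α)
    (χ : ℕ) (hχ : G.chromaticNumber = (χ : ℕ∞)) (hχ2 : 2 ≤ χ)
    (ε : ℝ) (hε : 0 < ε) :
    ∃ n₀ : ℕ, ∀ n ≥ n₀,
      (coverTuranNumber {k} n G : ℝ) ≤
        (1 - 1 / ((χ : ℝ) - 1) + ε) * (n.choose 2 : ℝ) := by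
  classical
  obtain ⟨r, rfl⟩ : ∃ r, χ = r + 1 := ⟨χ - 1, by omega⟩
  have hcol : G.Colorable (r + 1) := SimpleGraph.chromaticNumber_le_iff_colorable.1 hχ.le
  obtain ⟨C⟩ := hcol
  set T := Fintype.card α ^ 3 * (k + 1) + 1 with hT
  obtain ⟨N, hN⟩ := erdos_stone_ex r T (by omega) (by omega) ε hε
  refine ⟨N, fun n hn => ?_⟩
  have hB := hN n hn
  have hr : ((r + 1 : ℕ) : ℝ) - 1 = r := by push_cast; ring
  rw [hr]
  refine le_trans ?_ hB
  norm_cast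
  unfold coverTuranNumber
  apply csSup_le'
  rintro m ⟨H, hH, hfree, rfl⟩
  refine (covPairs_card_le H).trans ?_
  have hfr : (SimpleGraph.completeEquipartiteGraph (r + 1) T).Free (shadowG H) := by
    intro hcon
    exact hfree (berge_of_equipartite G k (r + 1) T n C (by omega) H
      (fun h hh => by simpa using hH h hh) hcon)
  simpa using SimpleGraph.card_edgeFinset_le_extremalNumber hfr
end

section
/- For every integer k ≥ 2 and every fixed graph G with χ(G) ≥ k + 1, the k-cover Turán density satisfies π̂_k(G) = 1 − 1/(χ(G)−1). -/
/-- The `k`-cover Turán density `π̂_k(G) = limsup_{n → ∞} êx_k(n, G) / C(n,2)`. -/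
noncomputable def coverTuranDensity {α : Type*} (k : ℕ) (G : SimpleGraph α) : ℝ :=
  Filter.limsup
    (fun n : ℕ => (coverTuranNumber {k} n G : ℝ) / (n.choose 2 : ℝ)) Filter.atTop

open Filter Finset Topology in
theorem aux_turanDensity_le (r t : ℕ) (hr : 0 < r) (ht : 0 < t) :
    SimpleGraph.turanDensity (SimpleGraph.completeEquipartiteGraph (r + 1) t) ≤ 1 - 1 / (r : ℝ) := by
  classical
  have hbot : SimpleGraph.completeEquipartiteGraph (r + 1) t ≠ ⊥ := by
    rw [Ne, SimpleGraph.completeEquipartiteGraph_eq_bot_iff]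
    omega
  set K := SimpleGraph.completeEquipartiteGraph (r + 1) t with hK
  refine le_of_forall_pos_le_add fun ε hε => ?_
  obtain ⟨N, hN⟩ := eventually_atTop.mp
    (SimpleGraph.eventually_completeEquipartiteGraph_isContained_of_minDegree hε r t)
  set c : ℝ := 1 - 1 / (r : ℝ) + ε with hc
  -- one step
  have step : ∀ n : ℕ, N ≤ n + 1 →
      (SimpleGraph.extremalNumber (n + 1) K : ℝ) ≤ SimpleGraph.extremalNumber n K + c * (n + 1) := by
    intro n hn
    obtain ⟨G, _, hG⟩ := SimpleGraph.exists_isExtremal_free (V := Fin (n + 1)) hbot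
    have hcard := SimpleGraph.card_edgeFinset_of_isExtremal_free hG
    have hmin : ¬ ((G.minDegree : ℝ) ≥ c * ((n + 1 : ℕ) : ℝ)) := fun h =>
      hG.prop (hN (n + 1) hn h)
    obtain ⟨v, hv⟩ := G.exists_minimal_degree_vertex
    have h1 := SimpleGraph.card_edgeFinset_deleteIncidenceSet_le_extremalNumber hG.prop v
    rw [SimpleGraph.card_edgeFinset_deleteIncidenceSet] at h1
    simp only [Fintype.card_fin, Nat.add_sub_cancel] at h1 hcard
    rw [hcard, ← hv] at h1
    push_cast at hmin
    have h2 : (SimpleGraph.extremalNumber (n + 1) K : ℝ)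
        ≤ SimpleGraph.extremalNumber n K + G.minDegree := by
      exact_mod_cast Nat.sub_le_iff_le_add.mp h1
    linarith [not_le.mp hmin]
  have tele : ∀ m : ℕ, (SimpleGraph.extremalNumber (N + m) K : ℝ)
      ≤ SimpleGraph.extremalNumber N K + c * (((N + m) * (N + m + 1) - N * (N + 1)) / 2) := by
    intro m
    induction m with
    | zero => simp
    | succ m ih =>
      have := step (N + m) (by omega)
      rw [← add_assoc]
      push_cast at this ⊢
      nlinarith
  have hlim := SimpleGraph.tendsto_turanDensity K
  have hlim2 : Tendsto (fun n : ℕ => (((SimpleGraph.extremalNumber N K : ℝ) - c * (N * (N + 1) / 2))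
      + c * ((n : ℝ) * (n + 1) / 2)) / (n.choose 2 : ℝ)) atTop (𝓝 c) := by
    have hinv : Tendsto (fun n : ℕ => ((n : ℝ))⁻¹) atTop (𝓝 0) := tendsto_inv_atTop_nhds_zero_nat
    set A := (SimpleGraph.extremalNumber N K : ℝ) - c * (N * (N + 1) / 2)
    have h3 : Tendsto (fun n : ℕ => (2 * A * ((n : ℝ))⁻¹ * ((n : ℝ))⁻¹ + c * (1 + ((n : ℝ))⁻¹))
        / (1 - ((n : ℝ))⁻¹)) atTop (𝓝 ((2 * A * 0 * 0 + c * (1 + 0)) / (1 - 0))) := by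
      refine Tendsto.div (((hinv.const_mul _).mul hinv).add ((hinv.const_add 1).const_mul c))
        (hinv.const_sub 1) (by norm_num)
    have h4 : (2 * A * 0 * 0 + c * (1 + 0)) / (1 - 0) = c := by ring
    rw [h4] at h3
    refine h3.congr' ?_
    filter_upwards [eventually_ge_atTop 2] with n hn
    have hn' : (2 : ℝ) ≤ n := by exact_mod_cast hn
    have : (n : ℝ) - 1 ≠ 0 := by linarith
    rw [Nat.cast_choose_two]
    field_simp
  refine le_of_tendsto_of_tendsto hlim hlim2 ?_
  filter_upwards [eventually_ge_atTop N] with n hn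
  obtain ⟨m, rfl⟩ := Nat.exists_eq_add_of_le hn
  have := tele m
  gcongr
  push_cast
  linarith

/-- The shadow graph. -/
def auxShadow {β : Type*} (H : Finset (Finset β)) : SimpleGraph β where
  Adj a b := a ≠ b ∧ ∃ h ∈ H, a ∈ h ∧ b ∈ h
  symm := ⟨fun _ _ ⟨hne, h, hH, ha, hb⟩ => ⟨hne.symm, h, hH, hb, ha⟩⟩
  loopless := ⟨fun _ h => h.1 rfl⟩

open Classical in
theorem aux_card_covPairs {n : ℕ} (H : Finset (Finset (Fin n))) :
    (covPairs H).card = (auxShadow H).edgeFinset.card := by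
  symm
  refine Finset.card_bij (fun e _ => e.toFinset) ?_ ?_ ?_
  · intro e he
    induction e using Sym2.ind with
    | _ a b =>
      rw [SimpleGraph.mem_edgeFinset, SimpleGraph.mem_edgeSet] at he
      obtain ⟨hne, h, hH, ha, hb⟩ := he
      simp only [covPairs, Finset.mem_biUnion, Finset.mem_powersetCard]
      refine ⟨h, hH, ?_, Sym2.card_toFinset_of_not_isDiag _ (by simpa using hne)⟩
      intro x hx
      rw [Sym2.mem_toFinset, Sym2.mem_iff] at hx
      rcases hx with rfl | rfl <;> assumption
  · intro e _ e' _ h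
    ext x
    rw [← Sym2.mem_toFinset, h, Sym2.mem_toFinset]
  · intro p hp
    simp only [covPairs, Finset.mem_biUnion, Finset.mem_powersetCard] at hp
    obtain ⟨h, hH, hsub, hcard⟩ := hp
    obtain ⟨a, b, hne, rfl⟩ := Finset.card_eq_two.mp hcard
    refine ⟨s(a, b), ?_, ?_⟩
    · rw [SimpleGraph.mem_edgeFinset, SimpleGraph.mem_edgeSet]
      exact ⟨hne, h, hH, hsub (by simp), hsub (by simp)⟩
    · ext x
      simp [Sym2.mem_toFinset]

/-- Blow-up. -/
def auxBlow {α : Type*} (G : SimpleGraph α) (M : ℕ) : SimpleGraph (α × Fin M) :=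
  G.comap Prod.fst

theorem aux_blow_contained {α : Type*} [Fintype α] (G : SimpleGraph α) (M c : ℕ)
    (hc : G.Colorable c) :
    ∃ t, 0 < t ∧ (auxBlow G M).IsContained (SimpleGraph.completeEquipartiteGraph c t) := by
  classical
  obtain ⟨C⟩ := hc
  let C' : (auxBlow G M).Coloring (Fin c) :=
    SimpleGraph.Coloring.mk (fun p => C p.1) (fun {a b} h => C.valid h)
  refine ⟨Fintype.card (α × Fin M) + 1, Nat.succ_pos _,
    SimpleGraph.isContained_completeEquipartiteGraph_of_colorable C' _ fun i => ?_⟩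
  exact (Fintype.card_subtype_le _).trans (Nat.le_succ _)

theorem aux_berge {α : Type*} [Fintype α] (G : SimpleGraph α) (k n : ℕ)
    (H : Finset (Finset (Fin n))) (hH : ∀ h ∈ H, h.card = k)
    (hcont : (auxBlow G (k * Fintype.card α ^ 3 + 1)).IsContained (auxShadow H)) :
    HasBergeCopy G H := by
  classical
  set M := k * Fintype.card α ^ 3 + 1 with hM
  obtain ⟨φ⟩ := hcont
  -- a hyperedge for each pair
  have hex : ∀ e : Sym2 (Fin n), ∃ h : Finset (Fin n), e ∈ (auxShadow H).edgeSet →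
      h ∈ H ∧ ∀ x ∈ e, x ∈ h := by
    intro e
    by_cases he : e ∈ (auxShadow H).edgeSet
    · induction e using Sym2.ind with
      | _ a b =>
        obtain ⟨-, h, hh, ha, hb⟩ := (SimpleGraph.mem_edgeSet _).mp he
        refine ⟨h, fun _ => ⟨hh, fun x hx => ?_⟩⟩
        rcases Sym2.mem_iff.mp hx with rfl | rfl <;> assumption
    · exact ⟨∅, fun h => absurd h he⟩
  choose g hg using hex
  let bad : α × α × α → Finset (α → Fin M) := fun p =>
    if G.Adj p.1 p.2.1 ∧ p.2.2 ≠ p.1 ∧ p.2.2 ≠ p.2.1 then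
      Finset.univ.filter fun f =>
        φ (p.2.2, f p.2.2) ∈ g s(φ (p.1, f p.1), φ (p.2.1, f p.2.1))
    else ∅
  have hadj : ∀ (f : α → Fin M) u v, G.Adj u v →
      s(φ (u, f u), φ (v, f v)) ∈ (auxShadow H).edgeSet := fun f u v h =>
    φ.toHom.map_adj (v := (u, f u)) (w := (v, f v)) h
  have hbad : ∀ p, (bad p).card ≤ k * M ^ (Fintype.card α - 1) := by
    rintro ⟨u, v, w⟩
    simp only [bad]
    split_ifs with hp
    · obtain ⟨huv, hwu, hwv⟩ := hp
      have hcard : (Finset.univ : Finset ({a // a ≠ w} → Fin M)).card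
          = M ^ (Fintype.card α - 1) := by
        simp [Fintype.card_subtype_compl]
      rw [← hcard]
      refine Finset.card_le_mul_card_image_of_maps_to
        (f := fun (f : α → Fin M) (a : {a // a ≠ w}) => f a) (fun _ _ => Finset.mem_univ _) k ?_
      intro q _
      let x := g s(φ (u, q ⟨u, hwu.symm⟩), φ (v, q ⟨v, hwv.symm⟩))
      by_cases hne : (Finset.filter (fun f : α → Fin M => (fun a : {a // a ≠ w} => f a) = q)
        (Finset.univ.filter fun f : α → Fin M =>
        φ (w, f w) ∈ g s(φ (u, f u), φ (v, f v)))).Nonempty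
      · obtain ⟨f₀, hf₀⟩ := hne
        have hxk : x.card = k := by
          simp only [Finset.mem_filter] at hf₀
          apply hH
          have := (hg _ (hadj f₀ u v huv)).1
          simp only [x, ← hf₀.2]
          exact this
        rw [← hxk]
        refine Finset.card_le_card_of_injOn (fun f => φ (w, f w)) ?_ ?_
        · intro f hf
          simp only [Finset.coe_filter, Finset.mem_filter, Finset.mem_univ, true_and,
            Set.mem_ofPred_eq] at hf
          simp only [x, ← hf.2]
          exact hf.1
        · intro f hf f' hf' heq
          simp only [Finset.coe_filter, Finset.mem_filter, Finset.mem_univ, true_and,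
            Set.mem_ofPred_eq] at hf hf'
          have h1 : f w = f' w := by simpa using φ.injective heq
          funext a
          by_cases ha : a = w
          · rw [ha, h1]
          · have := congrFun (hf.2.trans hf'.2.symm) ⟨a, ha⟩
            exact this
      · rw [Finset.not_nonempty_iff_eq_empty.mp hne]; simp
    · simp
  obtain ⟨f, hf⟩ : ∃ f : α → Fin M, ∀ p, f ∉ bad p := by
    by_contra! hcon
    have hsub : (Finset.univ : Finset (α → Fin M)) ⊆ Finset.univ.biUnion bad := by
      intro f _
      obtain ⟨p, hp⟩ := hcon f
      exact Finset.mem_biUnion.mpr ⟨p, Finset.mem_univ _, hp⟩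
    have h1 := (Finset.card_le_card hsub).trans
      (Finset.card_biUnion_le_card_mul _ _ _ (fun p _ => hbad p))
    simp only [Finset.card_univ, Fintype.card_fun, Fintype.card_fin, Fintype.card_prod] at h1
    rcases Nat.eq_zero_or_pos (Fintype.card α) with h0 | h0
    · simp [h0] at h1
    · obtain ⟨d, hd⟩ := Nat.exists_eq_succ_of_ne_zero h0.ne'
      have hpos : 0 < M ^ (Fintype.card α - 1) := by positivity
      have h2 : M ^ Fintype.card α = M ^ (Fintype.card α - 1) * M := by
        rw [hd]; simp [pow_succ]
      rw [h2] at h1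
      have h3 : M ^ (Fintype.card α - 1) * M ≤ M ^ (Fintype.card α - 1) * (k * Fintype.card α ^ 3) := by
        calc _ ≤ _ := h1
          _ = _ := by ring
      have := Nat.le_of_mul_le_mul_left h3 hpos
      omega
  have key : ∀ u v w, G.Adj u v → φ (w, f w) ∈ g s(φ (u, f u), φ (v, f v)) → w = u ∨ w = v := by
    intro u v w huv hw
    by_contra! hcon
    apply hf (u, v, w)
    simp only [bad]
    rw [if_pos ⟨huv, hcon.1, hcon.2⟩]
    simpa using hw
  refine ⟨fun u => φ (u, f u), fun e => g (e.map fun u => φ (u, f u)), ?_, ?_, ?_, ?_⟩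
  · intro u v h
    have := φ.injective h
    exact (Prod.ext_iff.mp this).1
  · intro e he e' he' h
    induction e using Sym2.ind with
    | _ u v =>
    induction e' using Sym2.ind with
    | _ u' v' =>
      simp only [Sym2.map_mk] at h
      rw [SimpleGraph.mem_edgeSet] at he he'
      have hu := (hg _ (hadj f u' v' he')).2 (φ (u', f u')) (by simp)
      have hv := (hg _ (hadj f u' v' he')).2 (φ (v', f v')) (by simp)
      rw [← h] at hu hv
      have h1 := key u v u' he hu
      have h2 := key u v v' he hv
      have h3 := he'.ne
      rw [Sym2.eq_iff]
      grind
  · intro e he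
    induction e using Sym2.ind with
    | _ u v => exact (hg _ (hadj f u v he)).1
  · intro u v huv
    have := (hg _ (hadj f u v huv)).2
    exact ⟨this _ (by simp), this _ (by simp)⟩

theorem aux_shadow_bound {α : Type*} [Fintype α] (k : ℕ) (G : SimpleGraph α) (c : ℕ)
    (hc : G.Colorable c) :
    ∃ t, 0 < t ∧ ∀ n, ∀ H : Finset (Finset (Fin n)), (∀ h ∈ H, h.card ∈ ({k} : Set ℕ)) →
      ¬ HasBergeCopy G H → (covPairs H).card ≤
        SimpleGraph.extremalNumber n (SimpleGraph.completeEquipartiteGraph c t) := by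
  classical
  obtain ⟨t, htpos, ht⟩ := aux_blow_contained G (k * Fintype.card α ^ 3 + 1) c hc
  refine ⟨t, htpos, fun n H hH hB => ?_⟩
  rw [aux_card_covPairs]
  have h := SimpleGraph.card_edgeFinset_le_extremalNumber (G := auxShadow H)
    (H := SimpleGraph.completeEquipartiteGraph c t)
    (fun hcon => hB (aux_berge G k n H (fun h hh => hH h hh) (ht.trans hcon)))
  simpa using h

theorem aux_lower {α : Type*} (k : ℕ) (hk : 2 ≤ k) (G : SimpleGraph α) (r : ℕ) (hkr : k ≤ r)
    (hc : ¬ G.Colorable r) (t : ℕ) (ht : 1 ≤ t) :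
    ∃ H : Finset (Finset (Fin (r * t))), (∀ h ∈ H, h.card ∈ ({k} : Set ℕ)) ∧
      ¬ HasBergeCopy G H ∧
      (SimpleGraph.turanGraph (r * t) r).edgeFinset.card ≤ (covPairs H).card := by
  classical
  have hr : 0 < r := by omega
  have hrn : r ≤ r * t := Nat.le_mul_of_pos_right r ht
  let H : Finset (Finset (Fin (r * t))) := Finset.univ.filter fun h =>
    h.card = k ∧ ∀ a ∈ h, ∀ b ∈ h, (a : ℕ) % r = (b : ℕ) % r → a = b
  refine ⟨H, fun h hh => (Finset.mem_filter.mp hh).2.1, ?_, ?_⟩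
  · rintro ⟨i, f, hi, -, hfH, hf⟩
    apply hc
    refine ⟨SimpleGraph.Coloring.mk (fun u => (⟨(i u : ℕ) % r, Nat.mod_lt _ hr⟩ : Fin r)) ?_⟩
    intro u v huv heq
    have hmem := (Finset.mem_filter.mp (hfH s(u, v) huv)).2.2
    have h1 := hf u v huv
    have := hmem _ h1.1 _ h1.2 (by simpa using heq)
    exact huv.ne (hi this)
  · rw [aux_card_covPairs]
    refine Finset.card_le_card ?_
    rw [SimpleGraph.edgeFinset_subset_edgeFinset]
    intro v w hvw
    rw [SimpleGraph.turanGraph_adj] at hvw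
    refine ⟨fun h => hvw (by rw [h]), ?_⟩
    obtain ⟨R, hR1, hR2, hR3⟩ := Finset.exists_subsuperset_card_eq
      (s := {(⟨(v : ℕ) % r, Nat.mod_lt _ hr⟩ : Fin r), ⟨(w : ℕ) % r, Nat.mod_lt _ hr⟩})
      (t := Finset.univ) (n := k) (Finset.subset_univ _)
      (Finset.card_le_two.trans hk) (by simpa using hkr)
    let ρ : Fin r → Fin (r * t) := fun c =>
      if (c : ℕ) = (v : ℕ) % r then v else if (c : ℕ) = (w : ℕ) % r then w
      else ⟨c, c.2.trans_le hrn⟩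
    have hρ : ∀ c, (ρ c : ℕ) % r = c := by
      intro c
      simp only [ρ]
      split_ifs with h1 h2
      · exact h1.symm
      · exact h2.symm
      · exact Nat.mod_eq_of_lt c.2
    have hinj : Function.Injective ρ := by
      intro c d h
      apply Fin.ext
      rw [← hρ c, ← hρ d, h]
    refine ⟨R.image ρ, ?_, ?_, ?_⟩
    · refine Finset.mem_filter.mpr ⟨Finset.mem_univ _, ?_, ?_⟩
      · rw [Finset.card_image_of_injective _ hinj, hR3]
      · intro a ha b hb hab
        obtain ⟨c, -, rfl⟩ := Finset.mem_image.mp ha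
        obtain ⟨d, -, rfl⟩ := Finset.mem_image.mp hb
        rw [hρ, hρ] at hab
        rw [Fin.ext hab]
    · refine Finset.mem_image.mpr ⟨⟨(v : ℕ) % r, Nat.mod_lt _ hr⟩, hR1 (by simp), ?_⟩
      simp [ρ]
    · refine Finset.mem_image.mpr ⟨⟨(w : ℕ) % r, Nat.mod_lt _ hr⟩, hR1 (by simp), ?_⟩
      simp [ρ, Ne.symm hvw]

theorem aux_turan_card (r t : ℕ) (hr : 0 < r) :
    (1 - 1 / (r : ℝ)) * ((r * t).choose 2 : ℝ)
      ≤ ((SimpleGraph.turanGraph (r * t) r).edgeFinset.card : ℝ) := by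
  rw [← (SimpleGraph.completeEquipartiteGraph.turanGraph (r := r) (t := t)).card_edgeFinset_eq,
    SimpleGraph.card_edgeFinset_completeEquipartiteGraph]
  push_cast
  rw [Nat.cast_choose_two, Nat.cast_choose_two]
  push_cast
  have h1 : (1 : ℝ) ≤ r := by exact_mod_cast hr
  have h2 : (1 - 1 / (r : ℝ)) * ((r * t : ℝ) * (r * t - 1) / 2)
      = ((r : ℝ) - 1) * t * (r * t - 1) / 2 := by
    field_simp
  rw [h2]
  have : 0 ≤ ((r : ℝ) - 1) * t := mul_nonneg (by linarith) (by positivity)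
  nlinarith

theorem stmt4 {α : Type*} [Fintype α] (k : ℕ) (hk : 2 ≤ k) (G : SimpleGraph α)
    (χ : ℕ) (hχ : G.chromaticNumber = (χ : ℕ∞)) (hkχ : k + 1 ≤ χ) :
    coverTuranDensity k G = 1 - 1 / ((χ : ℝ) - 1) := by
  classical
  obtain ⟨r, rfl⟩ : ∃ r, χ = r + 1 := ⟨χ - 1, by omega⟩
  have hkr : k ≤ r := by omega
  have hr : 0 < r := by omega
  have hcol : G.Colorable (r + 1) := SimpleGraph.chromaticNumber_le_iff_colorable.mp hχ.le
  have hncol : ¬ G.Colorable r := by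
    intro h
    have h1 := SimpleGraph.chromaticNumber_le_iff_colorable.mpr h
    rw [hχ] at h1
    have : r + 1 ≤ r := by exact_mod_cast h1
    omega
  have hgoal : 1 - 1 / (((r + 1 : ℕ) : ℝ) - 1) = 1 - 1 / (r : ℝ) := by push_cast; ring
  rw [hgoal]
  obtain ⟨t, htpos, ht⟩ := aux_shadow_bound k G (r + 1) hcol
  have hupper : ∀ n, coverTuranNumber {k} n G ≤
      SimpleGraph.extremalNumber n (SimpleGraph.completeEquipartiteGraph (r + 1) t) := by
    intro n
    refine csSup_le' ?_
    rintro m ⟨H, h1, h2, rfl⟩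
    exact ht n H h1 h2
  have hle : ∀ n, (coverTuranNumber {k} n G : ℝ) / (n.choose 2 : ℝ) ≤
      (SimpleGraph.extremalNumber n (SimpleGraph.completeEquipartiteGraph (r + 1) t) : ℝ)
        / (n.choose 2 : ℝ) := by
    intro n
    have := hupper n
    gcongr
  have hlim := SimpleGraph.tendsto_turanDensity (SimpleGraph.completeEquipartiteGraph (r + 1) t)
  have hbdd : Filter.IsBoundedUnder (· ≤ ·) Filter.atTop
      (fun n : ℕ => (coverTuranNumber {k} n G : ℝ) / (n.choose 2 : ℝ)) :=
    hlim.isBoundedUnder_le.mono_le (Filter.Eventually.of_forall hle)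
  have hbdd' : Filter.IsBoundedUnder (· ≥ ·) Filter.atTop
      (fun n : ℕ => (coverTuranNumber {k} n G : ℝ) / (n.choose 2 : ℝ)) :=
    Filter.isBoundedUnder_of ⟨0, fun n => by positivity⟩
  unfold coverTuranDensity
  apply le_antisymm
  · refine le_trans ?_ (aux_turanDensity_le r t hr htpos)
    rw [← hlim.limsup_eq]
    exact Filter.limsup_le_limsup (Filter.Eventually.of_forall hle)
      hbdd'.isCoboundedUnder_le hlim.isBoundedUnder_le
  · refine Filter.le_limsup_of_frequently_le ?_ hbdd
    rw [Filter.frequently_atTop]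
    intro a
    refine ⟨r * (a + 1), by nlinarith, ?_⟩
    obtain ⟨H, h1, h2, h3⟩ := aux_lower k hk G r hkr hncol (a + 1) (by omega)
    have h4 : (covPairs H).card ≤ coverTuranNumber {k} (r * (a + 1)) G := by
      refine le_csSup ⟨SimpleGraph.extremalNumber (r * (a + 1))
        (SimpleGraph.completeEquipartiteGraph (r + 1) t), ?_⟩ ⟨H, h1, h2, rfl⟩
      rintro m ⟨H', h1', h2', rfl⟩
      exact ht _ H' h1' h2'
    have h5 := aux_turan_card r (a + 1) hr
    have h6 : ((SimpleGraph.turanGraph (r * (a + 1)) r).edgeFinset.card : ℝ)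
        ≤ coverTuranNumber {k} (r * (a + 1)) G := by exact_mod_cast h3.trans h4
    have hpos : (0 : ℝ) < ((r * (a + 1)).choose 2 : ℝ) := by
      have : 0 < (r * (a + 1)).choose 2 := Nat.choose_pos (by nlinarith)
      exact_mod_cast this
    rw [le_div_iff₀ hpos]
    exact h5.trans h6
end

section
/- Let G be a simple graph satisfying both: (1) G is triangle-free and there exists a vertex v of G such that G − v is bipartite; (2) there exists a bipartite subgraph B of G with bipartition (U₁, U₂) such that E(G) \ E(B) forms a (possibly empty) matching all of whose edges have both endpoints in one of the parts U₁ or U₂. Then π̂_3(G) = 0; that is, for every d > 0 there exists n₀ such that every 3-uniform hypergraph H on n ≥ n₀ vertices whose shadow has at least d·C(n,2) edges contains a Berge copy of G. -/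
open Finset in
lemma dense_step (n : ℕ) (F : Finset (Fin n × Fin n)) (d : ℝ) (hd : 0 < d)
    (h : d * (n : ℝ) ^ 2 ≤ F.card) (hn : 2 ≤ d ^ 2 * n) :
    ∃ p, ∃ F' ⊆ F, d ^ 2 / 2 * (n : ℝ) ^ 2 ≤ (F'.card : ℝ) ∧
      ∀ e ∈ F', e.2 ≠ p ∧ (e.1, p) ∈ F := by
  by_contra hcon
  push Not at hcon
  have hn0 : (0 : ℝ) < n := by
    by_contra h0
    have : (n : ℝ) = 0 := le_antisymm (not_lt.mp h0) (Nat.cast_nonneg n)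
    rw [this] at hn; norm_num at hn
  have hne : Nonempty (Fin n) := ⟨⟨0, by exact_mod_cast hn0⟩⟩
  have h1 : ∀ p : Fin n, ((F.filter (fun e => (e.1, p) ∈ F)).card : ℝ)
      < d ^ 2 / 2 * (n : ℝ) ^ 2 + n := by
    intro p
    have h2 : ((F.filter (fun e => e.2 ≠ p ∧ (e.1, p) ∈ F)).card : ℝ)
        < d ^ 2 / 2 * (n : ℝ) ^ 2 := by
      by_contra hle
      obtain ⟨e, he, he'⟩ := hcon p (F.filter (fun e => e.2 ≠ p ∧ (e.1, p) ∈ F))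
        (filter_subset _ _) (not_lt.mp hle)
      rw [mem_filter] at he
      exact he' he.2.1 he.2.2
    have h3 : (F.filter (fun e => (e.1, p) ∈ F)).card ≤
        (F.filter (fun e => e.2 ≠ p ∧ (e.1, p) ∈ F)).card + n := by
      have : F.filter (fun e => (e.1, p) ∈ F) ⊆
          (F.filter (fun e => e.2 ≠ p ∧ (e.1, p) ∈ F)) ∪
            (univ.image (fun x : Fin n => (x, p))) := by
        intro e he
        rw [mem_filter] at he
        rw [mem_union, mem_filter, mem_image]
        by_cases hp : e.2 = p
        · right; exact ⟨e.1, mem_univ _, by rw [← hp]⟩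
        · left; exact ⟨he.1, hp, he.2⟩
      refine (card_le_card this).trans ((card_union_le _ _).trans ?_)
      have := card_image_le (s := (univ : Finset (Fin n))) (f := fun x : Fin n => (x, p))
      simp only [card_univ, Fintype.card_fin] at this
      omega
    have h3' : ((F.filter (fun e => (e.1, p) ∈ F)).card : ℝ) ≤
        (F.filter (fun e => e.2 ≠ p ∧ (e.1, p) ∈ F)).card + n := by exact_mod_cast h3
    linarith
  set deg : Fin n → ℕ := fun x => (F.filter (fun e => e.1 = x)).card with hdeg
  have hdeg' : ∀ x, (univ.filter (fun p => (x, p) ∈ F)).card = deg x := by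
    intro x
    refine card_bij (fun p _ => (x, p)) ?_ ?_ ?_
    · intro p hp; simpa using hp
    · intro p _ q _ hpq; simpa using hpq
    · rintro ⟨a, b⟩ hb
      simp only [mem_filter] at hb
      obtain ⟨hb, rfl⟩ := hb
      exact ⟨b, by simpa using hb, rfl⟩
  have hsum1 : ∑ x, deg x = F.card :=
    (card_eq_sum_card_fiberwise (f := Prod.fst) (s := F) (t := univ) (by simp [Set.MapsTo])).symm
  have hsum2 : ∑ p, (F.filter (fun e => (e.1, p) ∈ F)).card = ∑ x, deg x ^ 2 := by
    calc ∑ p, (F.filter (fun e => (e.1, p) ∈ F)).card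
        = ∑ p, ∑ e ∈ F, if (e.1, p) ∈ F then 1 else 0 := by
          refine sum_congr rfl fun p _ => ?_
          rw [card_filter]
      _ = ∑ e ∈ F, ∑ p, if (e.1, p) ∈ F then 1 else 0 := sum_comm
      _ = ∑ e ∈ F, deg e.1 := by
          refine sum_congr rfl fun e _ => ?_
          rw [← card_filter, hdeg']
      _ = ∑ x, ∑ e ∈ F.filter (fun e => e.1 = x), deg e.1 :=
          (sum_fiberwise F Prod.fst _).symm
      _ = ∑ x, deg x ^ 2 := by
          refine sum_congr rfl fun x _ => ?_
          rw [sum_congr rfl (g := fun _ => deg x)]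
          · rw [sum_const, smul_eq_mul, sq]
          · intro e he; rw [(mem_filter.mp he).2]
  have hcs : (∑ x, (deg x : ℝ)) ^ 2 ≤ n * ∑ x, (deg x : ℝ) ^ 2 := by
    have := sq_sum_le_card_mul_sum_sq (s := (univ : Finset (Fin n))) (f := fun x => (deg x : ℝ))
    simpa using this
  have hs1 : (∑ x, (deg x : ℝ)) = F.card := by exact_mod_cast hsum1
  have hs2 : (∑ p, ((F.filter (fun e => (e.1, p) ∈ F)).card : ℝ)) = ∑ x, (deg x : ℝ) ^ 2 := by
    exact_mod_cast hsum2
  have hlt : (∑ p, ((F.filter (fun e => (e.1, p) ∈ F)).card : ℝ)) <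
      n * (d ^ 2 / 2 * (n : ℝ) ^ 2 + n) := by
    have := sum_lt_sum_of_nonempty (s := (univ : Finset (Fin n))) univ_nonempty
      (fun p _ => h1 p)
    simpa [mul_add] using this
  rw [hs1] at hcs
  rw [hs2] at hlt
  have h5 : (d * (n : ℝ) ^ 2) ^ 2 ≤ (F.card : ℝ) ^ 2 := by gcongr
  have h6 : (d * (n : ℝ) ^ 2) ^ 2 < n * (n * (d ^ 2 / 2 * (n : ℝ) ^ 2 + n)) :=
    lt_of_le_of_lt (h5.trans hcs) (mul_lt_mul_of_pos_left hlt hn0)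
  have h7 : (n : ℝ) ^ 3 * (d ^ 2 * n) < (n : ℝ) ^ 3 * 2 := by nlinarith
  have := lt_of_mul_lt_mul_left h7 (by positivity)
  linarith

open Finset in
lemma dense_left (t : ℕ) : ∀ d : ℝ, 0 < d → ∃ d' : ℝ, 0 < d' ∧ ∃ n₀ : ℕ, ∀ n ≥ n₀,
    ∀ F : Finset (Fin n × Fin n), d * (n : ℝ) ^ 2 ≤ F.card →
    ∃ P : Finset (Fin n), P.card = t ∧ ∃ F' ⊆ F, d' * (n : ℝ) ^ 2 ≤ (F'.card : ℝ) ∧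
      ∀ e ∈ F', e.2 ∉ P ∧ ∀ p ∈ P, (e.1, p) ∈ F := by
  induction t with
  | zero =>
    intro d hd
    exact ⟨d, hd, 0, fun n _ F hF => ⟨∅, rfl, F, Subset.refl _, hF, by simp⟩⟩
  | succ t ih =>
    intro d hd
    obtain ⟨d', hd', n₀, H⟩ := ih d hd
    obtain ⟨m, hm⟩ := exists_nat_gt (2 / d' ^ 2)
    refine ⟨d' ^ 2 / 2, by positivity, max n₀ (max m 1), fun n hn F hF => ?_⟩
    have hn1 : n₀ ≤ n := le_trans (le_max_left _ _) hn
    have hn2 : m ≤ n := le_trans ((le_max_left _ _).trans (le_max_right _ _)) hn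
    have hn3 : 1 ≤ n := le_trans ((le_max_right _ _).trans (le_max_right _ _)) hn
    obtain ⟨P, hP, F', hF'F, hF', h1⟩ := H n hn1 F hF
    have hn2' : (m : ℝ) ≤ n := by exact_mod_cast hn2
    have hbig : 2 ≤ d' ^ 2 * n := by
      rw [div_lt_iff₀ (by positivity)] at hm
      nlinarith [mul_le_mul_of_nonneg_left hn2' (sq_nonneg d')]
    obtain ⟨p, F'', hsub, hcard, h2⟩ := dense_step n F' d' hd' hF' hbig
    have hpos : (0 : ℝ) < F''.card := by
      have : (1 : ℝ) ≤ n := by exact_mod_cast hn3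
      refine lt_of_lt_of_le ?_ hcard
      positivity
    have hne : F''.Nonempty := by
      rw [← card_pos]; exact_mod_cast hpos
    obtain ⟨e₀, he₀⟩ := hne
    have hp : p ∉ P := (h1 _ (h2 e₀ he₀).2).1
    refine ⟨insert p P, by rw [card_insert_of_notMem hp, hP], F'', hsub.trans hF'F, hcard, ?_⟩
    intro e he
    refine ⟨?_, ?_⟩
    · rw [mem_insert, not_or]
      exact ⟨(h2 e he).1, (h1 e (hsub he)).1⟩
    · intro q hq
      rcases mem_insert.mp hq with rfl | hq
      · exact hF'F (h2 e he).2
      · exact (h1 e (hsub he)).2 q hq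

open Finset in
lemma dense_right (t : ℕ) : ∀ d : ℝ, 0 < d → ∃ d' : ℝ, 0 < d' ∧ ∃ n₀ : ℕ, ∀ n ≥ n₀,
    ∀ F : Finset (Fin n × Fin n), d * (n : ℝ) ^ 2 ≤ F.card →
    ∃ P : Finset (Fin n), P.card = t ∧ ∃ F' ⊆ F, d' * (n : ℝ) ^ 2 ≤ (F'.card : ℝ) ∧
      ∀ e ∈ F', e.1 ∉ P ∧ ∀ p ∈ P, (p, e.2) ∈ F := by
  intro d hd
  obtain ⟨d', hd', n₀, H⟩ := dense_left t d hd
  refine ⟨d', hd', n₀, fun n hn F hF => ?_⟩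
  obtain ⟨P, hP, F', hsub, hc, h⟩ := H n hn (F.image Prod.swap)
    (by rwa [card_image_of_injective _ Prod.swap_injective])
  refine ⟨P, hP, F'.image Prod.swap, ?_, ?_, ?_⟩
  · intro e he
    obtain ⟨e', he', rfl⟩ := mem_image.mp he
    obtain ⟨e'', he'', rfl⟩ := mem_image.mp (hsub he')
    simpa using he''
  · rwa [card_image_of_injective _ Prod.swap_injective]
  · intro e he
    obtain ⟨e', he', rfl⟩ := mem_image.mp he
    refine ⟨(h e' he').1, fun p hp => ?_⟩
    have := (h e' he').2 p hp
    obtain ⟨e'', he'', h3⟩ := mem_image.mp this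
    have : e'' = (p, e'.1) := by rw [← Prod.swap_swap e'', h3]; rfl
    simpa [this] using he''

open Finset in
/-- either a matching of size `m`, or a small cover -/
lemma matching_or_cover {V : Type*} [DecidableEq V] (L : Finset (V × V)) (m : ℕ) :
    (∃ M ⊆ L, M.card = m ∧ Set.InjOn Prod.fst (M : Set (V × V)) ∧
      Set.InjOn Prod.snd (M : Set (V × V))) ∨
    (∃ A B : Finset V, A.card ≤ m ∧ B.card ≤ m ∧ ∀ e ∈ L, e.1 ∈ A ∨ e.2 ∈ B) := by
  classical
  induction m with
  | zero => left; exact ⟨∅, by simp, rfl, by simp, by simp⟩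
  | succ m ih =>
    rcases ih with ⟨M, hM, hc, h1, h2⟩ | ⟨A, B, hA, hB, h⟩
    · by_cases hcov : ∀ e ∈ L, e.1 ∈ M.image Prod.fst ∨ e.2 ∈ M.image Prod.snd
      · right
        exact ⟨M.image Prod.fst, M.image Prod.snd, by have := card_image_le (s := M) (f := Prod.fst); omega,
          by have := card_image_le (s := M) (f := Prod.snd); omega, hcov⟩
      · left
        push Not at hcov
        obtain ⟨e, heL, he1, he2⟩ := hcov
        have heM : e ∉ M := fun h => he1 (mem_image_of_mem _ h)
        refine ⟨insert e M, insert_subset heL hM, by rw [card_insert_of_notMem heM, hc], ?_, ?_⟩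
        · rw [coe_insert, Set.injOn_insert (by simpa using heM)]
          exact ⟨h1, by simpa using he1⟩
        · rw [coe_insert, Set.injOn_insert (by simpa using heM)]
          exact ⟨h2, by simpa using he2⟩
    · right; exact ⟨A, B, by omega, by omega, h⟩

lemma exists_enum {V : Type*} [Nonempty V] (B : Finset V) (m : ℕ) (h : B.card ≤ m) :
    ∃ e : Fin m → V, ∀ b ∈ B, ∃ k, e k = b := by
  classical
  refine ⟨fun k => B.toList.getD k (Classical.arbitrary V), fun b hb => ?_⟩
  obtain ⟨k, hk, rfl⟩ := List.getElem_of_mem (Finset.mem_toList.mpr hb)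
  refine ⟨⟨k, ?_⟩, ?_⟩
  · rw [Finset.length_toList] at hk; omega
  · simp only [List.getD]
    rw [List.getElem?_eq_getElem hk]
    rfl

/-- the tripartite setting -/
def TriSetup {n : ℕ} (H : Finset (Finset (Fin n))) (F : Finset (Fin n × Fin n))
    (g : Fin n → Fin n → Fin n) (c : Fin n → Fin 3) : Prop :=
  ∀ x y, (x, y) ∈ F → c x = 0 ∧ c y = 1 ∧ c (g x y) = 2 ∧ ({x, y, g x y} : Finset (Fin n)) ∈ H

lemma TriSetup.inj {n : ℕ} {H : Finset (Finset (Fin n))} {F : Finset (Fin n × Fin n)}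
    {g : Fin n → Fin n → Fin n} {c : Fin n → Fin 3} (hT : TriSetup H F g c)
    {x y x' y' : Fin n} (h : (x, y) ∈ F) (h' : (x', y') ∈ F)
    (he : ({x, y, g x y} : Finset (Fin n)) = {x', y', g x' y'}) : x = x' ∧ y = y' := by
  obtain ⟨a1, a2, a3, -⟩ := hT x y h
  obtain ⟨b1, b2, b3, -⟩ := hT x' y' h'
  have hx : x ∈ ({x', y', g x' y'} : Finset (Fin n)) := by rw [← he]; simp
  have hy : y ∈ ({x', y', g x' y'} : Finset (Fin n)) := by rw [← he]; simp
  simp only [Finset.mem_insert, Finset.mem_singleton] at hx hy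
  constructor
  · rcases hx with h | h | h
    · exact h
    · rw [h, b2] at a1; exact absurd a1 (by decide)
    · rw [h, b3] at a1; exact absurd a1 (by decide)
  · rcases hy with h | h | h
    · rw [h, b1] at a2; exact absurd a2 (by decide)
    · exact h
    · rw [h, b3] at a2; exact absurd a2 (by decide)

lemma berge_of {α : Type*} (G : SimpleGraph α) {n : ℕ} {H : Finset (Finset (Fin n))}
    {F : Finset (Fin n × Fin n)} {g : Fin n → Fin n → Fin n} {c : Fin n → Fin 3}
    (hT : TriSetup H F g c) (i : α → Fin n) (hi : Function.Injective i)
    (T : α → α → Fin n → Fin n → Prop)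
    (hT1 : ∀ u v, G.Adj u v → ∃ x y, (x, y) ∈ F ∧ (T u v x y ∨ T v u x y) ∧
      i u ∈ ({x, y, g x y} : Finset (Fin n)) ∧ i v ∈ ({x, y, g x y} : Finset (Fin n)))
    (hT2 : ∀ u v u' v' x y, T u v x y → T u' v' x y → s(u, v) = s(u', v')) :
    HasBergeCopy G H := by
  classical
  have key : ∀ e : Sym2 α, ∃ h : Finset (Fin n), e ∈ G.edgeSet →
      ∃ u v x y, e = s(u, v) ∧ (x, y) ∈ F ∧ T u v x y ∧ h = {x, y, g x y} ∧ i u ∈ h ∧ i v ∈ h := by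
    intro e
    induction e with
    | _ u v =>
      by_cases huv : G.Adj u v
      · obtain ⟨x, y, hF, hTT, h1, h2⟩ := hT1 u v huv
        refine ⟨{x, y, g x y}, fun _ => ?_⟩
        rcases hTT with hTT | hTT
        · exact ⟨u, v, x, y, rfl, hF, hTT, rfl, h1, h2⟩
        · exact ⟨v, u, x, y, Sym2.eq_swap, hF, hTT, rfl, h2, h1⟩
      · exact ⟨∅, fun h => absurd h huv⟩
  choose f hf using key
  refine ⟨i, f, hi, ?_, ?_, ?_⟩
  · intro e he e' he' hee
    obtain ⟨u, v, x, y, rfl, hF, hTT, hh, -, -⟩ := hf e he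
    obtain ⟨u', v', x', y', rfl, hF', hTT', hh', -, -⟩ := hf e' he'
    rw [hh, hh'] at hee
    obtain ⟨rfl, rfl⟩ := hT.inj hF hF' hee
    exact hT2 _ _ _ _ _ _ hTT hTT'
  · intro e he
    obtain ⟨u, v, x, y, rfl, hF, hTT, hh, -, -⟩ := hf e he
    rw [hh]
    exact (hT x y hF).2.2.2
  · intro u v huv
    obtain ⟨u', v', x, y, he, hF, hTT, hh, h1, h2⟩ := hf s(u, v) huv
    rcases Sym2.eq_iff.mp he with ⟨rfl, rfl⟩ | ⟨rfl, rfl⟩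
    · exact ⟨h1, h2⟩
    · exact ⟨h2, h1⟩

lemma no_tri {α : Type*} {G : SimpleGraph α} (h : G.CliqueFree 3) {a b c : α}
    (hab : G.Adj a b) (hac : G.Adj a c) (hbc : G.Adj b c) : False := by
  classical
  exact h {a, b, c} (SimpleGraph.is3Clique_triple_iff.mpr ⟨hab, hac, hbc⟩)

/-- embedding into the first structure -/
lemma case_one {α : Type*} (G : SimpleGraph α) (htri : G.CliqueFree 3) (v : α)
    (hcol : (G.induce ({v}ᶜ : Set α)).Colorable 2)
    {n : ℕ} {H : Finset (Finset (Fin n))}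
    {F : Finset (Fin n × Fin n)} {g : Fin n → Fin n → Fin n} {c : Fin n → Fin 3}
    (hT : TriSetup H F g c) (z : Fin n) (a b p q : α → Fin n)
    (hab : ∀ u, (a u, b u) ∈ F ∧ g (a u) (b u) = z)
    (hqp : ∀ u w, (q u, p w) ∈ F) (hap : ∀ u w, (a u, p w) ∈ F) (hqb : ∀ u w, (q u, b w) ∈ F)
    (ha : Function.Injective a) (hb : Function.Injective b)
    (hp : Function.Injective p) (hq : Function.Injective q)
    (haq : ∀ u w, a u ≠ q w) (hbp : ∀ u w, b u ≠ p w) : HasBergeCopy G H := by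
  classical
  obtain ⟨C⟩ := hcol
  let col : α → Fin 2 := fun u => if h : u = v then 0 else C ⟨u, h⟩
  have hcolr : ∀ u w, u ≠ v → w ≠ v → G.Adj u w → col u ≠ col w := by
    intro u w hu hw huw
    have : (G.induce ({v}ᶜ : Set α)).Adj ⟨u, hu⟩ ⟨w, hw⟩ := huw
    have := C.valid this
    simpa [col, hu, hw] using this
  have ca : ∀ u, c (a u) = 0 := fun u => (hT _ _ (hab u).1).1
  have cb : ∀ u, c (b u) = 1 := fun u => (hT _ _ (hab u).1).2.1
  have cz : c z = 2 := by
    have := (hT _ _ (hab v).1).2.2.1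
    rwa [(hab v).2] at this
  have cq : ∀ u, c (q u) = 0 := fun u => (hT _ _ (hqp u u)).1
  have cp : ∀ u, c (p u) = 1 := fun u => (hT _ _ (hqp u u)).2.1
  let i : α → Fin n := fun u => if u = v then z else
    if col u = 0 then (if G.Adj v u then a u else q u) else (if G.Adj v u then b u else p u)
  have hci : ∀ u, c (i u) = if u = v then 2 else if col u = 0 then 0 else 1 := by
    intro u
    simp only [i]
    split_ifs <;> simp [ca, cb, cz, cq, cp]
  have hi : Function.Injective i := by
    intro u w huw
    have hc : c (i u) = c (i w) := by rw [huw]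
    rw [hci, hci] at hc
    simp only [i] at huw
    split_ifs at huw hc with h1 h2 h3 h4 h5 h6 h7 h8 <;>
      first
      | exact absurd hc (by decide)
      | (rw [h1, h2])
      | exact ha huw
      | exact hb huw
      | exact hp huw
      | exact hq huw
      | exact absurd huw (haq _ _)
      | exact absurd huw.symm (haq _ _)
      | exact absurd huw (hbp _ _)
      | exact absurd huw.symm (hbp _ _)
  have hF : ∀ u w, u ≠ v → w ≠ v → G.Adj u w → col u = 0 → col w ≠ 0 → (i u, i w) ∈ F := by
    intro u w hu hw huw hcu hcw
    simp only [i, hu, hw, hcu, hcw, if_false, if_true]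
    by_cases h1 : G.Adj v u
    · by_cases h2 : G.Adj v w
      · exact (no_tri htri h1 h2 huw).elim
      · simp only [h1, h2, if_true, if_false]; exact hap _ _
    · by_cases h2 : G.Adj v w
      · simp only [h1, h2, if_true, if_false]; exact hqb _ _
      · simp only [h1, h2, if_false]; exact hqp _ _
  refine berge_of G hT i hi (fun u w x y => (u = v ∧ G.Adj v w ∧ x = a w ∧ y = b w) ∨
    (u ≠ v ∧ w ≠ v ∧ col u = 0 ∧ col w ≠ 0 ∧ x = i u ∧ y = i w)) ?_ ?_
  · have hz : ∀ w, G.Adj v w → i w ∈ ({a w, b w, g (a w) (b w)} : Finset (Fin n)) := by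
      intro w hw
      have : w ≠ v := hw.ne'
      simp only [i, this, hw, if_true, if_false]
      split_ifs <;> simp
    have hzv : ∀ w, i v ∈ ({a w, b w, g (a w) (b w)} : Finset (Fin n)) := by
      intro w
      simp [i, (hab w).2]
    intro u w huw
    by_cases hu : u = v
    · subst hu
      exact ⟨a w, b w, (hab w).1, Or.inl (Or.inl ⟨rfl, huw, rfl, rfl⟩), hzv w, hz w huw⟩
    by_cases hw : w = v
    · subst hw
      exact ⟨a u, b u, (hab u).1, Or.inr (Or.inl ⟨rfl, huw.symm, rfl, rfl⟩), hz u huw.symm, hzv u⟩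
    have hne := hcolr u w hu hw huw
    by_cases hc : col u = 0
    · have hc' : col w ≠ 0 := fun h => hne (hc.trans h.symm)
      exact ⟨i u, i w, hF u w hu hw huw hc hc', Or.inl (Or.inr ⟨hu, hw, hc, hc', rfl, rfl⟩),
        by simp, by simp⟩
    · have hc' : col w = 0 := by
        generalize col u = x at hc hne
        generalize col w = y at hne
        revert x y; decide
      exact ⟨i w, i u, hF w u hw hu huw.symm hc' hc, Or.inr (Or.inr ⟨hw, hu, hc', hc, rfl, rfl⟩),
        by simp, by simp⟩
  · have hmix : ∀ w u' w', G.Adj v w → u' ≠ v → w' ≠ v → col u' = 0 → col w' ≠ 0 →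
        a w = i u' → b w = i w' → False := by
      intro w u' w' hw hu' hw' h1 h2 h3 h4
      simp only [i, hu', h1, if_true, if_false] at h3
      simp only [i, hw', h2, if_false] at h4
      split_ifs at h3 with h5
      · split_ifs at h4 with h6
        · have e1 := ha h3
          have e2 := hb h4
          subst e1; subst e2
          exact h2 h1
        · exact hbp _ _ h4
      · exact haq _ _ h3
    rintro u w u' w' x y (⟨rfl, h1, rfl, rfl⟩ | ⟨h1, h2, h3, h4, rfl, rfl⟩)
      (⟨h1', h2', h3', h4'⟩ | ⟨h1', h2', h3', h4', h5', h6'⟩)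
    · rw [h1', ha h3']
    · exact (hmix w u' w' h1 h1' h2' h3' h4' h5' h6').elim
    · subst h1'
      exact (hmix w' u w h2' h1 h2 h3 h4 h3'.symm h4'.symm).elim
    · rw [hi h5', hi h6']

/-- embedding into the second structure -/
lemma case_two {α : Type*} [Fintype α] (G : SimpleGraph α) (htri : G.CliqueFree 3)
    (B : SimpleGraph α) (S : Set α)
    (hB : ∀ u v : α, B.Adj u v → (u ∈ S ↔ v ∉ S))
    (hS : ∀ u v, G.Adj u v → ¬ B.Adj u v → u ∈ S)
    (hM : ∀ u v w, G.Adj u v → ¬ B.Adj u v → G.Adj u w → ¬ B.Adj u w → v = w)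
    {n : ℕ} {H : Finset (Finset (Fin n))}
    {F : Finset (Fin n × Fin n)} {g : Fin n → Fin n → Fin n} {c : Fin n → Fin 3}
    (hT : TriSetup H F g c) (x₀ : Fin n) (q y z : α → Fin n)
    (hq : Function.Injective q) (hz : Function.Injective z) (hy : Function.Injective y)
    (hx₀ : ∀ u, x₀ ≠ q u)
    (h1 : ∀ u w, (q u, y w) ∈ F ∧ g (q u) (y w) = z w)
    (h2 : ∀ w, (x₀, y w) ∈ F ∧ g x₀ (y w) = z w) : HasBergeCopy G H := by
  classical
  let ord : α → ℕ := fun u => (Fintype.equivFin α u : ℕ)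
  have hord : Function.Injective ord := fun u w h =>
    (Fintype.equivFin α).injective (Fin.ext h)
  let N : α → α → Prop := fun u w => G.Adj u w ∧ ¬ B.Adj u w
  have hNs : ∀ u w, N u w → N w u := fun u w h => ⟨h.1.symm, fun h' => h.2 h'.symm⟩
  have hNM : ∀ u w w', N u w → N u w' → w = w' := fun u w w' h h' =>
    hM u w w' h.1 h.2 h'.1 h'.2
  let low : α → Prop := fun u => ∃ w, N u w ∧ ord w < ord u
  have hr : ∀ u, ∃ w, (low u → N u w ∧ ord w < ord u) ∧ (¬ low u → w = u) := by
    intro u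
    by_cases h : low u
    · obtain ⟨w, hw⟩ := h
      exact ⟨w, fun _ => hw, fun h => absurd ⟨w, hw⟩ h⟩
    · exact ⟨u, fun h' => absurd h' h, fun _ => rfl⟩
  choose r hr1 hr2 using hr
  have hrN : ∀ u u', u ≠ u' → r u = r u' → N u u' := by
    intro u u' hne h
    by_cases hu : low u <;> by_cases hu' : low u'
    · have a1 := (hr1 u hu).1
      have a2 := (hr1 u' hu').1
      rw [← h] at a2
      exact absurd (hNM _ _ _ (hNs _ _ a1) (hNs _ _ a2)) hne
    · have a1 := (hr1 u hu).1
      rwa [h, hr2 u' hu'] at a1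
    · have a1 := (hr1 u' hu').1
      rw [← h, hr2 u hu] at a1
      exact hNs _ _ a1
    · rw [hr2 u hu, hr2 u' hu'] at h
      exact absurd h hne
  have cq : ∀ u, c (q u) = 0 := fun u => (hT _ _ (h1 u u).1).1
  have cy : ∀ u, c (y u) = 1 := fun u => (hT _ _ (h1 u u).1).2.1
  have cz : ∀ u, c (z u) = 2 := fun u => by
    have := (hT _ _ (h1 u u).1).2.2.1
    rwa [(h1 u u).2] at this
  let i : α → Fin n := fun u => if u ∈ S then (if low u then z (r u) else y (r u)) else q u
  have hi : Function.Injective i := by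
    intro u w huw
    have hc : c (i u) = c (i w) := by rw [huw]
    simp only [i] at huw hc
    split_ifs at huw hc with a1 a2 a3 a4 a5 a6 a7 a8 <;>
      simp only [cq, cy, cz] at hc <;>
      first
      | exact absurd hc (by decide)
      | exact hq huw
      | skip
    · have h := hz huw
      have b1 := (hr1 u a2).1
      have b2 := (hr1 w a4).1
      rw [← h] at b2
      exact hNM _ _ _ (hNs _ _ b1) (hNs _ _ b2)
    all_goals
      have h := hy huw
      rwa [hr2 _ (by assumption), hr2 _ (by assumption)] at h
  have hmem : ∀ u x, u ∈ S → g x (y (r u)) = z (r u) →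
      i u ∈ ({x, y (r u), g x (y (r u))} : Finset (Fin n)) := by
    intro u x hu hg
    simp only [i, hu, if_true, hg]
    split_ifs <;> simp
  refine berge_of G hT i hi (fun u w x' y' => G.Adj u w ∧
    ((u ∉ S ∧ w ∈ S ∧ x' = q u ∧ y' = y (r w)) ∨
    (N u w ∧ r u = u ∧ r w = u ∧ x' = x₀ ∧ y' = y u))) ?_ ?_
  · intro u w huw
    by_cases hb : B.Adj u w
    · by_cases hu : u ∈ S
      · have hw : w ∉ S := (hB u w hb).mp hu
        refine ⟨q w, y (r u), (h1 _ _).1, Or.inr ⟨huw.symm, Or.inl ⟨hw, hu, rfl, rfl⟩⟩,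
          hmem u _ hu (h1 _ _).2, by simp [i, hw]⟩
      · have hw : w ∈ S := by
          by_contra hw; exact hu ((hB u w hb).mpr hw)
        refine ⟨q u, y (r w), (h1 _ _).1, Or.inl ⟨huw, Or.inl ⟨hu, hw, rfl, rfl⟩⟩,
          by simp [i, hu], hmem w _ hw (h1 _ _).2⟩
    · have hN : N u w := ⟨huw, hb⟩
      have aux : ∀ u w, N u w → ord u < ord w → r u = u ∧ r w = u := by
        intro u w hN hlt
        constructor
        · refine hr2 u ?_
          rintro ⟨w', hw', hlt'⟩
          rw [hNM _ _ _ hw' hN] at hlt'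
          omega
        · have := (hr1 w ⟨u, hNs _ _ hN, hlt⟩).1
          exact hNM _ _ _ this (hNs _ _ hN)
      have huS := hS u w huw hb
      have hwS := hS w u huw.symm (fun h => hb h.symm)
      rcases lt_trichotomy (ord u) (ord w) with hlt | heq | hlt
      · obtain ⟨e1, e2⟩ := aux u w hN hlt
        refine ⟨x₀, y u, (h2 u).1, Or.inl ⟨huw, Or.inr ⟨hN, e1, e2, rfl, rfl⟩⟩, ?_, ?_⟩
        · have := hmem u x₀ huS (h2 _).2
          rwa [e1] at this
        · have := hmem w x₀ hwS (h2 _).2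
          rwa [e2] at this
      · exact absurd (hord heq) huw.ne
      · obtain ⟨e1, e2⟩ := aux w u (hNs _ _ hN) hlt
        refine ⟨x₀, y w, (h2 w).1, Or.inr ⟨huw.symm, Or.inr ⟨hNs _ _ hN, e1, e2, rfl, rfl⟩⟩, ?_, ?_⟩
        · have := hmem u x₀ huS (h2 _).2
          rwa [e2] at this
        · have := hmem w x₀ hwS (h2 _).2
          rwa [e1] at this
  · rintro u w u' w' x' y' ⟨hA, (⟨a1, a2, rfl, rfl⟩ | ⟨a1, a2, a3, rfl, rfl⟩)⟩
      ⟨hA', (⟨b1, b2, b3, b4⟩ | ⟨b1, b2, b3, b4, b5⟩)⟩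
    · have e1 := hq b3
      have e2 := hy b4
      subst e1
      by_cases hww : w = w'
      · rw [hww]
      · exact (no_tri htri hA hA' (hrN w w' hww e2).1).elim
    · exact absurd b4.symm (hx₀ u)
    · exact absurd b3 (hx₀ u')
    · have e := hy b5
      subst e
      rw [hNM _ _ _ a1 b1]

lemma exists_inj {α V : Type*} [Fintype α] (P : Finset V) (h : Fintype.card α ≤ P.card) :
    ∃ p : α → V, Function.Injective p ∧ ∀ u, p u ∈ P := by
  obtain ⟨f⟩ := Function.Embedding.nonempty_of_card_le (α := α) (β := P) (by simpa using h)
  exact ⟨fun u => f u, fun u w h => f.injective (Subtype.ext h), fun u => (f u).2⟩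

lemma pigeon {ι γ : Type*} [DecidableEq γ] [Fintype ι] [Nonempty ι] (F : Finset γ) (P : ι → γ → Prop)
    [∀ i, DecidablePred (P i)]
    (h : ∀ e ∈ F, ∃ k, P k e) (D : ℝ) (hD : D ≤ F.card) :
    ∃ k, D / (Fintype.card ι : ℝ) ≤ ((F.filter (P k)).card : ℝ) := by
  by_contra hcon
  push Not at hcon
  have h1 : F ⊆ Finset.univ.biUnion (fun k => F.filter (P k)) := by
    intro e he
    obtain ⟨k, hk⟩ := h e he
    simp only [Finset.mem_biUnion, Finset.mem_univ, true_and, Finset.mem_filter]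
    exact ⟨k, he, hk⟩
  have h2 : F.card ≤ ∑ k, (F.filter (P k)).card :=
    (Finset.card_le_card h1).trans Finset.card_biUnion_le
  have h2' : (F.card : ℝ) ≤ ∑ k, ((F.filter (P k)).card : ℝ) := by exact_mod_cast h2
  have h3 := Finset.sum_lt_sum_of_nonempty (s := (Finset.univ : Finset ι))
    Finset.univ_nonempty (fun k _ => hcon k)
  rw [Finset.sum_const, Finset.card_univ, nsmul_eq_mul] at h3
  have hpos : (0 : ℝ) < Fintype.card ι := by exact_mod_cast Fintype.card_pos
  rw [mul_div_cancel₀ _ hpos.ne'] at h3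
  linarith

lemma finish_two {α : Type*} [Fintype α] (G : SimpleGraph α) (htri : G.CliqueFree 3)
    (B : SimpleGraph α) (S : Set α)
    (hB : ∀ u v : α, B.Adj u v → (u ∈ S ↔ v ∉ S))
    (hS : ∀ u v, G.Adj u v → ¬ B.Adj u v → u ∈ S)
    (hM : ∀ u v w, G.Adj u v → ¬ B.Adj u v → G.Adj u w → ¬ B.Adj u w → v = w)
    (m : ℕ) (hm : 0 < m) (d : ℝ) (hd : 0 < d) :
    ∃ n₀ : ℕ, ∀ n ≥ n₀, ∀ (H : Finset (Finset (Fin n)))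
      (F : Finset (Fin n × Fin n)) (g : Fin n → Fin n → Fin n) (c : Fin n → Fin 3),
      TriSetup H F g c → ∀ C : Fin n → Finset (Fin n), (∀ z, (C z).card ≤ m) →
      (∀ x y, (x, y) ∈ F → y ∈ C (g x y)) → d * (n : ℝ) ^ 2 ≤ F.card → HasBergeCopy G H := by
  classical
  have hm' : (0 : ℝ) < m := by exact_mod_cast hm
  obtain ⟨d', hd', n₀, key⟩ := dense_right (Fintype.card α) (d / m) (by positivity)
  obtain ⟨k₀, hk₀⟩ := exists_nat_gt ((Fintype.card α : ℝ) / d')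
  refine ⟨max n₀ (max k₀ 1), fun n hn H F g c hT C hC hFC hF => ?_⟩
  have hn1 : n₀ ≤ n := le_trans (le_max_left _ _) hn
  have hn2 : k₀ ≤ n := le_trans ((le_max_left _ _).trans (le_max_right _ _)) hn
  have hn3 : 1 ≤ n := le_trans ((le_max_right _ _).trans (le_max_right _ _)) hn
  have hn2' : (k₀ : ℝ) ≤ n := by exact_mod_cast hn2
  have hn3' : (1 : ℝ) ≤ n := by exact_mod_cast hn3
  have : Nonempty (Fin n) := ⟨⟨0, hn3⟩⟩
  have : Nonempty (Fin m) := ⟨⟨0, hm⟩⟩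
  have hen : ∀ z, ∃ e : Fin m → Fin n, ∀ b ∈ C z, ∃ k, e k = b := fun z => exists_enum _ _ (hC z)
  choose en hen using hen
  obtain ⟨k, hk⟩ := pigeon F (fun (k : Fin m) e => en (g e.1 e.2) k = e.2)
    (fun e he => hen _ _ (hFC e.1 e.2 he)) _ hF
  rw [Fintype.card_fin] at hk
  set F2 : Finset (Fin n × Fin n) := Finset.univ.filter
    (fun e => (e.1, en e.2 k) ∈ F ∧ g e.1 (en e.2 k) = e.2) with hF2
  have hF2c : d / m * (n : ℝ) ^ 2 ≤ F2.card := by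
    have : (F.filter (fun e => en (g e.1 e.2) k = e.2)).card ≤ F2.card := by
      refine Finset.card_le_card_of_injOn (fun e => (e.1, g e.1 e.2)) ?_ ?_
      · rintro ⟨x, y⟩ he
        simp only [Finset.coe_filter, Set.mem_ofPred_eq] at he
        simp only [hF2, Finset.coe_filter, Set.mem_ofPred_eq, Finset.mem_univ, true_and, he.2]
        exact ⟨he.1, trivial⟩
      · rintro ⟨x, y⟩ he ⟨x', y'⟩ he' h
        simp only [Finset.coe_filter, Set.mem_ofPred_eq] at he he'
        simp only [Prod.mk.injEq] at h
        obtain ⟨rfl, h⟩ := h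
        rw [← he.2, ← he'.2, h]
    have : ((F.filter (fun e => en (g e.1 e.2) k = e.2)).card : ℝ) ≤ F2.card := by exact_mod_cast this
    calc d / m * (n : ℝ) ^ 2 = d * (n : ℝ) ^ 2 / m := by ring
      _ ≤ _ := hk
      _ ≤ _ := this
  obtain ⟨Q, hQ, F3, hF3, hF3c, h3⟩ := key n hn1 F2 hF2c
  have : Nonempty (Fin n) := ⟨⟨0, hn3⟩⟩
  obtain ⟨x₀, hx₀⟩ := pigeon F3 (fun (x : Fin n) e => e.1 = x) (fun e _ => ⟨e.1, rfl⟩) _ hF3c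
  rw [Fintype.card_fin] at hx₀
  set Z : Finset (Fin n) := (F3.filter (fun e => e.1 = x₀)).image Prod.snd with hZ
  have hZc : Z.card = (F3.filter (fun e => e.1 = x₀)).card := by
    refine Finset.card_image_of_injOn ?_
    rintro ⟨x, y⟩ he ⟨x', y'⟩ he' h
    simp only [Finset.coe_filter, Set.mem_ofPred_eq] at he he'
    simp only at h
    rw [he.2, he'.2, h]
  have hZge : Fintype.card α ≤ Z.card := by
    have : (Fintype.card α : ℝ) ≤ Z.card := by
      rw [hZc]
      refine le_trans ?_ hx₀
      rw [div_lt_iff₀ hd'] at hk₀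
      rw [le_div_iff₀ (by linarith)]
      nlinarith [mul_le_mul_of_nonneg_left hn2' hd'.le]
    exact_mod_cast this
  have hZm : ∀ z ∈ Z, (x₀, z) ∈ F3 := by
    intro z hz
    obtain ⟨⟨x, y⟩, he, rfl⟩ := Finset.mem_image.mp hz
    obtain ⟨h1, h2⟩ := Finset.mem_filter.mp he
    simp only at h2
    rw [← h2]; exact h1
  obtain ⟨z, hzi, hz⟩ := exists_inj Z hZge
  obtain ⟨q, hqi, hq⟩ := exists_inj (α := α) Q hQ.ge
  have hF2m : ∀ x z, (x, z) ∈ F2 → (x, en z k) ∈ F ∧ g x (en z k) = z := by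
    intro x z h
    simpa [hF2] using h
  refine case_two G htri B S hB hS hM hT x₀ q (fun u => en (z u) k) z hqi hzi ?_ ?_ ?_ ?_
  · intro u w h
    simp only at h
    have e1 := (hF2m _ _ (hF3 (hZm _ (hz u)))).2
    have e2 := (hF2m _ _ (hF3 (hZm _ (hz w)))).2
    rw [h, e2] at e1
    exact hzi e1.symm
  · intro u h
    have := (h3 _ (hZm _ (hz u))).1
    simp only at this
    rw [h] at this
    exact this (hq u)
  · intro u w
    exact hF2m _ _ ((h3 _ (hZm _ (hz w))).2 _ (hq u))
  · intro w
    exact hF2m _ _ (hF3 (hZm _ (hz w)))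

lemma TriSetup.mono {n : ℕ} {H : Finset (Finset (Fin n))} {F F' : Finset (Fin n × Fin n)}
    {g : Fin n → Fin n → Fin n} {c : Fin n → Fin 3} (hT : TriSetup H F g c) (h : F' ⊆ F) :
    TriSetup H F' g c := fun x y hxy => hT x y (h hxy)

lemma TriSetup.swap {n : ℕ} {H : Finset (Finset (Fin n))} {F : Finset (Fin n × Fin n)}
    {g : Fin n → Fin n → Fin n} {c : Fin n → Fin 3} (hT : TriSetup H F g c) :
    TriSetup H (F.image Prod.swap) (fun y x => g x y) (fun v => Equiv.swap 0 1 (c v)) := by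
  intro y x h
  have h' : (x, y) ∈ F := by
    obtain ⟨⟨a, b⟩, he, h2⟩ := Finset.mem_image.mp h
    simp only [Prod.swap_prod_mk, Prod.mk.injEq] at h2
    obtain ⟨rfl, rfl⟩ := h2
    exact he
  obtain ⟨h1, h2, h3, h4⟩ := hT x y h'
  refine ⟨by simp only [h2]; decide, by simp only [h1]; decide, by simp only [h3]; decide, ?_⟩
  rw [Finset.insert_comm]; exact h4

lemma main_tri {α : Type*} [Fintype α] (G : SimpleGraph α) (htri : G.CliqueFree 3)
    (v : α) (hcol : (G.induce ({v}ᶜ : Set α)).Colorable 2)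
    (B : SimpleGraph α) (S : Set α)
    (hB : ∀ u v : α, B.Adj u v → (u ∈ S ↔ v ∉ S))
    (hS : ∀ u v, G.Adj u v → ¬ B.Adj u v → u ∈ S)
    (hM : ∀ u v w, G.Adj u v → ¬ B.Adj u v → G.Adj u w → ¬ B.Adj u w → v = w)
    (d : ℝ) (hd : 0 < d) :
    ∃ n₀ : ℕ, ∀ n ≥ n₀, ∀ (H : Finset (Finset (Fin n)))
      (F : Finset (Fin n × Fin n)) (g : Fin n → Fin n → Fin n) (c : Fin n → Fin 3),
      TriSetup H F g c → d * (n : ℝ) ^ 2 ≤ F.card → HasBergeCopy G H := by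
  classical
  have htpos : 0 < Fintype.card α := Fintype.card_pos_iff.mpr ⟨v⟩
  obtain ⟨d1, hd1, n1, k1⟩ := dense_left (Fintype.card α) d hd
  obtain ⟨d2, hd2, n2, k2⟩ := dense_right (Fintype.card α) d1 hd1
  obtain ⟨n3, k3⟩ := finish_two G htri B S hB hS hM (Fintype.card α) htpos (d2 / 2) (by positivity)
  refine ⟨max n1 (max n2 n3), fun n hn H F g c hT hF => ?_⟩
  have hn1 : n1 ≤ n := le_trans (le_max_left _ _) hn
  have hn2 : n2 ≤ n := le_trans ((le_max_left _ _).trans (le_max_right _ _)) hn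
  have hn3 : n3 ≤ n := le_trans ((le_max_right _ _).trans (le_max_right _ _)) hn
  obtain ⟨P, hP, F1, hF1, hF1c, h1⟩ := k1 n hn1 F hF
  obtain ⟨Q, hQ, F2, hF2, hF2c, h2⟩ := k2 n hn2 F1 hF1c
  by_cases hmat : ∃ z, ∃ M ⊆ F2.filter (fun e => g e.1 e.2 = z), M.card = Fintype.card α ∧
      Set.InjOn Prod.fst (M : Set (Fin n × Fin n)) ∧ Set.InjOn Prod.snd (M : Set (Fin n × Fin n))
  · obtain ⟨z, M, hMs, hMc, hM1, hM2⟩ := hmat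
    obtain ⟨ab, habi, hab⟩ := exists_inj (α := α) M hMc.ge
    obtain ⟨p, hpi, hp⟩ := exists_inj (α := α) P hP.ge
    obtain ⟨q, hqi, hq⟩ := exists_inj (α := α) Q hQ.ge
    have hab2 : ∀ u, ab u ∈ F2 := fun u => (Finset.mem_filter.mp (hMs (hab u))).1
    have habz : ∀ u, g (ab u).1 (ab u).2 = z := fun u => (Finset.mem_filter.mp (hMs (hab u))).2
    refine case_one G htri v hcol hT z (fun u => (ab u).1) (fun u => (ab u).2) p q
      ?_ ?_ ?_ ?_ ?_ ?_ hpi hqi ?_ ?_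
    · exact fun u => ⟨hF1 (hF2 (hab2 u)), habz u⟩
    · intro u w
      have := (h2 _ (hab2 v)).2 _ (hq u)
      exact (h1 _ this).2 _ (hp w)
    · exact fun u w => (h1 _ (hF2 (hab2 u))).2 _ (hp w)
    · exact fun u w => hF1 ((h2 _ (hab2 w)).2 _ (hq u))
    · exact fun u w h => habi (hM1 (hab u) (hab w) h)
    · exact fun u w h => habi (hM2 (hab u) (hab w) h)
    · intro u w h
      exact (h2 _ (hab2 u)).1 (h ▸ hq w)
    · intro u w h
      exact (h1 _ (hF2 (hab2 u))).1 (h ▸ hp w)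
  · push Not at hmat
    have hcov : ∀ z, ∃ A C : Finset (Fin n), A.card ≤ Fintype.card α ∧ C.card ≤ Fintype.card α ∧
        ∀ e ∈ F2.filter (fun e => g e.1 e.2 = z), e.1 ∈ A ∨ e.2 ∈ C := by
      intro z
      rcases matching_or_cover (F2.filter (fun e => g e.1 e.2 = z)) (Fintype.card α) with
        ⟨M, a1, a2, a3, a4⟩ | h
      · exact absurd a4 (hmat z M a1 a2 a3)
      · exact h
    choose A C hA hC hAC using hcov
    have hT2 := hT.mono (hF2.trans hF1)
    obtain ⟨b, hb⟩ := pigeon F2 (fun (b : Bool) e =>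
      if b then e.1 ∈ A (g e.1 e.2) else e.2 ∈ C (g e.1 e.2)) (by
        intro e he
        rcases hAC (g e.1 e.2) e (Finset.mem_filter.mpr ⟨he, rfl⟩) with h | h
        · exact ⟨true, by simpa using h⟩
        · exact ⟨false, by simpa using h⟩) _ hF2c
    rw [Fintype.card_bool] at hb
    have hb' : d2 / 2 * (n : ℝ) ^ 2 ≤ ((F2.filter (fun e =>
      if b then e.1 ∈ A (g e.1 e.2) else e.2 ∈ C (g e.1 e.2))).card : ℝ) := by
      refine le_trans (le_of_eq ?_) hb
      push_cast; ring
    cases b with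
    | false =>
      refine k3 n hn3 H _ g c (hT2.mono (Finset.filter_subset _ _)) C hC ?_ hb'
      intro x y hxy
      simpa using (Finset.mem_filter.mp hxy).2
    | true =>
      refine k3 n hn3 H _ _ _ (hT2.mono (Finset.filter_subset _ _)).swap A hA ?_
        (by rw [Finset.card_image_of_injective _ Prod.swap_injective]; exact hb')
      intro x y hxy
      obtain ⟨⟨a, b⟩, he, h2⟩ := Finset.mem_image.mp hxy
      simp only [Prod.swap_prod_mk, Prod.mk.injEq] at h2
      obtain ⟨rfl, rfl⟩ := h2
      simpa using (Finset.mem_filter.mp he).2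

lemma count_col {n : ℕ} (x y z : Fin n) (hxy : x ≠ y) (hxz : x ≠ z) (hyz : y ≠ z) :
    Fintype.card (Fin n → Fin 3) ≤
      27 * (Finset.univ.filter (fun c : Fin n → Fin 3 => c x = 0 ∧ c y = 1 ∧ c z = 2)).card := by
  classical
  have h := Finset.card_le_card_of_injOn
    (s := (Finset.univ : Finset (Fin n → Fin 3)))
    (t := (Finset.univ : Finset (Fin 3 × Fin 3 × Fin 3)) ×ˢ
      (Finset.univ.filter (fun c : Fin n → Fin 3 => c x = 0 ∧ c y = 1 ∧ c z = 2)))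
    (fun c => ((c x, c y, c z), Function.update (Function.update (Function.update c x 0) y 1) z 2))
    (by
      intro c _
      simp [Function.update_apply, hxy, hxz, hyz])
    (by
      intro c _ c' _ h
      simp only [Prod.mk.injEq] at h
      obtain ⟨⟨h1, h2, h3⟩, h4⟩ := h
      funext w
      by_cases e1 : w = x
      · rw [e1, h1]
      by_cases e2 : w = y
      · rw [e2, h2]
      by_cases e3 : w = z
      · rw [e3, h3]
      have := congrFun h4 w
      simpa [Function.update_apply, e1, e2, e3] using this)
  rw [Finset.card_product, Finset.card_univ, Finset.card_univ] at h
  simpa using h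

lemma exists_tri {n : ℕ} [Nonempty (Fin n)] (H : Finset (Finset (Fin n))) (hH : ∀ h ∈ H, h.card = 3) :
    ∃ (F : Finset (Fin n × Fin n)) (g : Fin n → Fin n → Fin n) (c : Fin n → Fin 3),
      TriSetup H F g c ∧ (covPairs H).card ≤ 27 * F.card := by
  classical
  have hx : ∀ e : Finset (Fin n), ∃ xyz : Fin n × Fin n × Fin n, e ∈ covPairs H →
      e = {xyz.1, xyz.2.1} ∧ xyz.1 ≠ xyz.2.1 ∧ xyz.1 ≠ xyz.2.2 ∧ xyz.2.1 ≠ xyz.2.2 ∧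
      ({xyz.1, xyz.2.1, xyz.2.2} : Finset (Fin n)) ∈ H := by
    intro e
    by_cases he : e ∈ covPairs H
    · have he' := he
      simp only [covPairs, Finset.mem_biUnion, Finset.mem_powersetCard] at he'
      obtain ⟨h, hh, heh, hec⟩ := he'
      obtain ⟨x, y, hxy, rfl⟩ := Finset.card_eq_two.mp hec
      have h1 : (h \ {x, y}).card = 1 := by
        rw [Finset.card_sdiff_of_subset heh, hH h hh, hec]
      obtain ⟨z, hz⟩ := Finset.card_eq_one.mp h1
      have hzm : z ∈ h \ {x, y} := by rw [hz]; simp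
      simp only [Finset.mem_sdiff, Finset.mem_insert, Finset.mem_singleton, not_or] at hzm
      refine ⟨(x, y, z), fun _ => ⟨rfl, hxy, fun h => hzm.2.1 h.symm, fun h => hzm.2.2 h.symm, ?_⟩⟩
      have : ({x, y, z} : Finset (Fin n)) = h := by
        rw [← Finset.union_sdiff_of_subset heh, hz]
        ext w; simp [or_assoc]
      simp only
      rw [this]; exact hh
    · exact ⟨Classical.arbitrary _, fun h => absurd h he⟩
  choose T hT using hx
  -- choose a good colouring
  have hc : ∃ c : Fin n → Fin 3, (covPairs H).card ≤ 27 *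
      ((covPairs H).filter (fun e => c (T e).1 = 0 ∧ c (T e).2.1 = 1 ∧ c (T e).2.2 = 2)).card := by
    by_contra hcon
    push Not at hcon
    have h1 := Finset.sum_lt_sum_of_nonempty (s := (Finset.univ : Finset (Fin n → Fin 3)))
      Finset.univ_nonempty (fun c _ => hcon c)
    rw [← Finset.mul_sum] at h1
    rw [Finset.sum_congr rfl (fun c _ => Finset.card_filter _ (covPairs H))] at h1
    rw [Finset.sum_comm, Finset.mul_sum] at h1
    have h2 : ∑ e ∈ covPairs H, Fintype.card (Fin n → Fin 3) ≤ ∑ e ∈ covPairs H, 27 *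
        ∑ c : Fin n → Fin 3, if c (T e).1 = 0 ∧ c (T e).2.1 = 1 ∧ c (T e).2.2 = 2 then 1 else 0 := by
      refine Finset.sum_le_sum fun e he => ?_
      rw [← Finset.card_filter]
      obtain ⟨-, a1, a2, a3, -⟩ := hT e he
      exact count_col _ _ _ a1 a2 a3
    rw [Finset.sum_const, smul_eq_mul] at h2 h1
    rw [Finset.card_univ, mul_comm] at h1
    omega
  obtain ⟨c, hc⟩ := hc
  set E := (covPairs H).filter (fun e => c (T e).1 = 0 ∧ c (T e).2.1 = 1 ∧ c (T e).2.2 = 2) with hE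
  have hEm : ∀ e ∈ E, e ∈ covPairs H ∧ c (T e).1 = 0 ∧ c (T e).2.1 = 1 ∧ c (T e).2.2 = 2 :=
    fun e he => Finset.mem_filter.mp he
  refine ⟨E.image (fun e => ((T e).1, (T e).2.1)), fun x y => (T {x, y}).2.2, c, ?_, ?_⟩
  · intro x y hxy
    obtain ⟨e, he, h⟩ := Finset.mem_image.mp hxy
    simp only [Prod.mk.injEq] at h
    obtain ⟨rfl, rfl⟩ := h
    obtain ⟨h1, h2, h3, h4⟩ := hEm e he
    obtain ⟨a1, -, -, -, a5⟩ := hT e h1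
    simp only [← a1]
    exact ⟨h2, h3, h4, a5⟩
  · rw [Finset.card_image_of_injOn]
    · exact hc
    · intro e he e' he' h
      simp only [Prod.mk.injEq] at h
      rw [(hT e (hEm e he).1).1, (hT e' (hEm e' he').1).1, h.1, h.2]

lemma stmt6_part_two {α : Type*} [Fintype α] (G : SimpleGraph α)
    (h1 : G.CliqueFree 3 ∧ ∃ v : α, (G.induce ({v}ᶜ : Set α)).Colorable 2)
    (h2 : ∃ (B : SimpleGraph α) (U : Set α), B ≤ G ∧
      (∀ u v : α, B.Adj u v → (u ∈ U ↔ v ∉ U)) ∧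
      ∃ S : Set α, (S = U ∨ S = Uᶜ) ∧
        (∀ e ∈ G.edgeSet \ B.edgeSet, ∀ x : α, x ∈ e → x ∈ S) ∧
        (∀ e ∈ G.edgeSet \ B.edgeSet, ∀ e' ∈ G.edgeSet \ B.edgeSet,
          e ≠ e' → ∀ x : α, x ∈ e → x ∉ e')) :
      ∀ d : ℝ, 0 < d → ∃ n₀ : ℕ, ∀ n ≥ n₀, ∀ H : Finset (Finset (Fin n)),
        (∀ h ∈ H, h.card = 3) →
        d * (n.choose 2 : ℝ) ≤ ((covPairs H).card : ℝ) →
        HasBergeCopy G H := by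
  obtain ⟨htri, v, hcol⟩ := h1
  obtain ⟨B, U, -, hBU, S, hSU, hS, hM⟩ := h2
  have hBS : ∀ u v : α, B.Adj u v → (u ∈ S ↔ v ∉ S) := by
    intro u w h
    have := hBU u w h
    rcases hSU with rfl | rfl
    · exact this
    · simp only [Set.mem_compl_iff, not_not]; tauto
  intro d hd
  obtain ⟨n₀, key⟩ := main_tri G htri v hcol B S hBS
    (fun u w h h' => hS s(u, w) ⟨h, h'⟩ u (by simp))
    (fun u w w' h h' k k' => by
      by_contra hne
      refine hM s(u, w) ⟨h, h'⟩ s(u, w') ⟨k, k'⟩ ?_ u (by simp) (by simp)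
      intro he
      rcases Sym2.eq_iff.mp he with ⟨-, h⟩ | ⟨h1, h2⟩
      · exact hne h
      · exact hne (h2.trans h1)) (d / 108) (by positivity)
  refine ⟨max n₀ 2, fun n hn H hH hd' => ?_⟩
  have hn1 : n₀ ≤ n := le_trans (le_max_left _ _) hn
  have hn2 : 2 ≤ n := le_trans (le_max_right _ _) hn
  have : Nonempty (Fin n) := ⟨⟨0, by omega⟩⟩
  obtain ⟨F, g, c, hT, hF⟩ := exists_tri H hH
  refine key n hn1 H F g c hT ?_
  have hF' : ((covPairs H).card : ℝ) ≤ 27 * F.card := by exact_mod_cast hF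
  have hch : (n : ℝ) ^ 2 / 4 ≤ (n.choose 2 : ℝ) := by
    rw [Nat.cast_choose_two]
    have : (2 : ℝ) ≤ n := by exact_mod_cast hn2
    nlinarith
  nlinarith [mul_le_mul_of_nonneg_left hch hd.le]

theorem stmt6 {α : Type*} [Fintype α] (G : SimpleGraph α)
    (h1 : G.CliqueFree 3 ∧ ∃ v : α, (G.induce ({v}ᶜ : Set α)).Colorable 2)
    (h2 : ∃ (B : SimpleGraph α) (U : Set α), B ≤ G ∧
      (∀ u v : α, B.Adj u v → (u ∈ U ↔ v ∉ U)) ∧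
      ∃ S : Set α, (S = U ∨ S = Uᶜ) ∧
        (∀ e ∈ G.edgeSet \ B.edgeSet, ∀ x : α, x ∈ e → x ∈ S) ∧
        (∀ e ∈ G.edgeSet \ B.edgeSet, ∀ e' ∈ G.edgeSet \ B.edgeSet,
          e ≠ e' → ∀ x : α, x ∈ e → x ∉ e')) :
    coverTuranDensity 3 G = 0 ∧
      ∀ d : ℝ, 0 < d → ∃ n₀ : ℕ, ∀ n ≥ n₀, ∀ H : Finset (Finset (Fin n)),
        (∀ h ∈ H, h.card = 3) →
        d * (n.choose 2 : ℝ) ≤ ((covPairs H).card : ℝ) →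
        HasBergeCopy G H := by
  have key := stmt6_part_two G h1 h2
  refine ⟨?_, key⟩
  refine Filter.Tendsto.limsup_eq ?_
  rw [Metric.tendsto_atTop]
  intro ε hε
  obtain ⟨n₀, hn₀⟩ := key (ε / 2) (by positivity)
  refine ⟨max n₀ 2, fun n hn => ?_⟩
  have hn1 : n₀ ≤ n := le_trans (le_max_left _ _) hn
  have hn2 : 2 ≤ n := le_trans (le_max_right _ _) hn
  have hpos : (0 : ℝ) < (n.choose 2 : ℝ) := by exact_mod_cast Nat.choose_pos hn2
  have hle : (coverTuranNumber {3} n G : ℝ) ≤ ε / 2 * (n.choose 2 : ℝ) := by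
    have hnat : coverTuranNumber {3} n G ≤ ⌊ε / 2 * (n.choose 2 : ℝ)⌋₊ := by
      unfold coverTuranNumber
      refine csSup_le' ?_
      rintro m ⟨H, hH, hB, rfl⟩
      refine Nat.le_floor ?_
      by_contra hlt
      exact hB (hn₀ n hn1 H (fun h hh => by simpa using hH h hh) (not_le.mp hlt).le)
    exact (Nat.cast_le.mpr hnat).trans (Nat.floor_le (by positivity))
  rw [Real.dist_eq, sub_zero, abs_of_nonneg (by positivity), div_lt_iff₀ hpos]
  nlinarith
end
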